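/- The third homotopy group of the 2-sphere is infinite cyclic: for S² the unit sphere in Euclidean space ℝ³ (with the subspace topology) and any basepoint b ∈ S², there is a group isomorphism π₃(S², b) ≅ ℤ. -/

import Mathlib

/-!
The two-sphere is modelled by the space `B` of quaternions `a` with `a² = -1`, based at `i`. The map
`q ↦ q i q⁻¹` from the non-zero quaternions to `B` is the Hopf fibration up to homotopy: homotopies lift
along it (`exists_lift`), and its fibre over `i` consists of the non-zero complex numbers, where
functions on cubes have continuous logarithms (`exists_log`).

The second homotopy group of `B` is infinite cyclic (`pi_two`). A two-dimensional loop lifts to the non-zero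
quaternions, and the boundary values of a lift wind around the origin of the complex plane; their
winding number is the degree. Loops of equal degree are homotopic because a quaternion-valued function
on a cube of dimension less than four can be made free of zeros (`exists_nonvanishing`).

The second and third homotopy groups of `B` are isomorphic (`pi_three`) through the map `susp`, which
suspends a loop `g` and composes with the Hopf map: it conjugates `i` by the arcs that run from `1`
through `g k` to `-1`. Since loops and homotopies in dimension at least three lift to the non-zero
quaternions relative to the boundary (`exists_lift_rel`), its bijectivity amounts to the Freudenthal
suspension theorem from the two-sphere to the three-sphere. A family of paths from `1` to `-1` with at
most three parameters can be put in general position, so that along each path all passages through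
the positive reals come before all passages through the negative ones, with a continuous choice of a
separating time (`exists_separation`). The two parts of each path can then be pulled tight, which
deforms the paths to arcs (`exists_susp_of_separated`, `homotopic_const_of_susp`).

Finally the unit sphere of `ℝ³` is identified with `B` by a homeomorphism taking the given basepoint
to `i`.
-/

open scoped Topology

namespace PiThree

open scoped unitInterval Quaternion Topology.Homotopy

/-! ### Quaternionic square roots of `-1`, homotopy lifting and logarithms -/

/-- The quaternion unit `i`. -/
def qi : ℍ[ℝ] := ⟨0, 1, 0, 0⟩

@[simp] lemma qi_re : qi.re = 0 := rfl
@[simp] lemma qi_imI : qi.imI = 1 := rfl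
@[simp] lemma qi_imJ : qi.imJ = 0 := rfl
@[simp] lemma qi_imK : qi.imK = 0 := rfl

lemma qi_mul_qi : qi * qi = -1 := by
  ext <;> simp

lemma qi_ne_zero : qi ≠ 0 := by
  intro h
  have := qi_mul_qi
  rw [h] at this
  simp at this

lemma norm_eq_one_of_sq {a : ℍ[ℝ]} (ha : a * a = -1) : ‖a‖ = 1 := by
  have h : ‖a‖ * ‖a‖ = 1 := by rw [← norm_mul, ha, norm_neg, norm_one]
  nlinarith [norm_nonneg a]

/-- If `a² = b² = -1`, left multiplication by `transport b a` carries quaternions conjugating `i`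
to `a` to quaternions conjugating `i` to `b`; it is the identity when `a = b`. -/
noncomputable def transport (b a : ℍ[ℝ]) : ℍ[ℝ] := (2⁻¹ : ℝ) • (1 - b * a)

lemma transport_self {a : ℍ[ℝ]} (ha : a * a = -1) : transport a a = 1 := by
  rw [transport, ha, sub_neg_eq_add, ← two_smul ℝ (1 : ℍ[ℝ]), smul_smul]
  norm_num

lemma transport_mul {a b : ℍ[ℝ]} (ha : a * a = -1) (hb : b * b = -1) :
    transport b a * a = b * transport b a := by
  rw [transport, smul_mul_assoc, mul_smul_comm, sub_mul, mul_sub, mul_assoc, ha, ← mul_assoc, hb]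
  simp [add_comm]

lemma transport_ne_zero {a b : ℍ[ℝ]} (ha : a * a = -1) (hab : ‖b - a‖ < 2) :
    transport b a ≠ 0 := by
  intro h
  rw [transport, smul_eq_zero, sub_eq_zero] at h
  have h1 : b * a = 1 := (h.resolve_left (by norm_num)).symm
  have h2 : b = -a := by
    have : b * a * a = a := by rw [h1, one_mul]
    rw [mul_assoc, ha, mul_neg, mul_one] at this
    rw [← this, neg_neg]
  rw [h2, show -a - a = (-2 : ℝ) • a by rw [neg_smul, two_smul]; abel, norm_smul,
    norm_eq_one_of_sq ha] at hab
  norm_num at hab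

/-- Homotopy lifting for `q ↦ q i q⁻¹`, stationary where the homotopy is stationary. The lifting
condition `q i q⁻¹ = a` is written `q * i = a * q`. -/
lemma exists_lift {Y : Type*} [PseudoMetricSpace Y] [CompactSpace Y] (H : I × Y → ℍ[ℝ])
    (hH : Continuous H) (hsq : ∀ p, H p * H p = -1) (q : Y → ℍ[ℝ]) (hq : Continuous q)
    (hq0 : ∀ y, q y ≠ 0) (hqH : ∀ y, q y * qi = H (0, y) * q y) :
    ∃ Q : I × Y → ℍ[ℝ], Continuous Q ∧ (∀ p, Q p ≠ 0) ∧ (∀ p, Q p * qi = H p * Q p) ∧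
      (∀ y, Q (0, y) = q y) ∧
      ∀ y, (∀ s, H (s, y) = H (0, y)) → ∀ s, Q (s, y) = q y := by
  obtain ⟨δ, hδ, hδH⟩ := Metric.uniformContinuous_iff.1
    (CompactSpace.uniformContinuous_of_continuous hH) 2 (by norm_num)
  obtain ⟨N, hN⟩ := exists_nat_gt (1 / δ)
  have hNpos : (0 : ℝ) < N := lt_trans (by positivity) hN
  -- the homotopy stopped at time `k / N`
  let c : ℕ → I := fun k ↦ Set.projIcc 0 1 zero_le_one ((k : ℝ) / N)
  let st : ℕ → I × Y → I × Y := fun k p ↦ (min p.1 (c k), p.2)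
  have hst : ∀ k, Continuous (st k) := fun k ↦ by fun_prop
  have hc0 : c 0 = 0 := by
    apply Subtype.ext
    simp [c, Set.projIcc]
  have hcN : c N = 1 := by
    apply Subtype.ext
    simp [c, Set.projIcc, div_self hNpos.ne']
  have hstep : ∀ k p, dist (st (k + 1) p) (st k p) < δ := by
    intro k p
    have h1 : dist (st (k + 1) p) (st k p) = |(min p.1 (c (k+1)) : I).1 - (min p.1 (c k) : I).1| := by
      simp [st, Prod.dist_eq, Subtype.dist_eq, Real.dist_eq]
    rw [h1]
    have h2 : |((c (k + 1) : I) : ℝ) - (c k : I)| ≤ 1 / N := by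
      have := abs_max_sub_max_le_abs (min 1 (((k + 1 : ℕ) : ℝ) / N)) (min 1 ((k : ℝ) / N)) 0
      have h3 := abs_min_sub_min_le_max 1 (((k + 1 : ℕ) : ℝ) / N) 1 ((k : ℝ) / N)
      have h4 : |(((k + 1 : ℕ) : ℝ) / N) - (k : ℝ) / N| = 1 / N := by
        rw [← sub_div]; simp [abs_of_pos hNpos]
      rw [h4] at h3
      simp only [sub_self, abs_zero] at h3
      rw [max_eq_right (by positivity)] at h3
      simp only [c, Set.coe_projIcc]
      rw [max_comm, max_comm (0:ℝ) (min 1 _)]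
      linarith
    have h3 : |(min p.1 (c (k+1)) : I).1 - (min p.1 (c k) : I).1| ≤ 1 / N := by
      have := abs_min_sub_min_le_max (p.1 : ℝ) (c (k + 1)) p.1 (c k)
      simp only [sub_self, abs_zero] at this
      rw [max_eq_right (abs_nonneg _)] at this
      have e : ∀ a b : I, ((min a b : I) : ℝ) = min (a : ℝ) b := fun a b ↦
        (Monotone.map_min (f := ((↑) : I → ℝ)) (fun _ _ h ↦ h))
      rw [e, e]
      linarith
    have : 1 / (N : ℝ) < δ := by
      rw [div_lt_iff₀ hδ] at hN
      rw [div_lt_iff₀ hNpos]; linarith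
    linarith
  -- a lift of the homotopy stopped at `k / N` is transported to one stopped at `(k + 1) / N`: values
  -- at consecutive stops are at distance less than `2`, hence not antipodal
  have key : ∀ k, ∃ Q : I × Y → ℍ[ℝ], Continuous Q ∧ (∀ p, Q p ≠ 0) ∧
      (∀ p, Q p * qi = H (st k p) * Q p) ∧ (∀ y, Q (0, y) = q y) ∧
      ∀ y, (∀ s, H (s, y) = H (0, y)) → ∀ s, Q (s, y) = q y := by
    intro k
    induction k with
    | zero =>
      refine ⟨fun p ↦ q p.2, by fun_prop, fun p ↦ hq0 _, fun p ↦ ?_, fun y ↦ rfl, fun y _ s ↦ rfl⟩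
      have : st 0 p = (0, p.2) := by simp [st, hc0]
      rw [this, hqH]
    | succ k ih =>
      obtain ⟨Q, h1, h2, h3, h4, h5⟩ := ih
      refine ⟨fun p ↦ transport (H (st (k + 1) p)) (H (st k p)) * Q p, ?_, fun p ↦ ?_, fun p ↦ ?_,
        fun y ↦ ?_, fun y hy s ↦ ?_⟩
      · have := hst k
        have := hst (k + 1)
        unfold transport
        fun_prop
      · refine mul_ne_zero (transport_ne_zero (hsq _) ?_) (h2 p)
        rw [← dist_eq_norm]
        exact hδH (hstep k p)
      · rw [mul_assoc, h3, ← mul_assoc, transport_mul (hsq _) (hsq _), mul_assoc]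
      · have e : ∀ k, st k (0, y) = (0, y) := fun k ↦ by simp [st]
        simp only [e, transport_self (hsq _), one_mul, h4]
      · simp only [st, hy (min s _), transport_self (hsq _), one_mul, h5 y hy]
  obtain ⟨Q, h1, h2, h3, h4, h5⟩ := key N
  refine ⟨Q, h1, h2, fun p ↦ ?_, h4, h5⟩
  have : st N p = p := by
    simp only [st, hcN]
    exact Prod.ext (min_eq_left (show p.1 ≤ 1 from p.1.2.2)) rfl
  rw [h3, this]

/-- Continuous logarithms exist on cubes. -/
lemma exists_log {n : ℕ} (c : (Fin n → I) → ℂ) (hc : Continuous c) (h0 : ∀ x, c x ≠ 0) :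
    ∃ l : (Fin n → I) → ℂ, Continuous l ∧ ∀ x, Complex.exp (l x) = c x := by
  let r : (Fin n → ℝ) → (Fin n → I) := fun x i ↦ Set.projIcc 0 1 zero_le_one (x i)
  have hr : Continuous r := by fun_prop
  let e : (Fin n → I) → (Fin n → ℝ) := fun x i ↦ x i
  have he : Continuous e := by fun_prop
  have hre : ∀ x, r (e x) = x := fun x ↦ funext fun i ↦ Set.projIcc_val _ _
  obtain ⟨F, ⟨h1, h2⟩, -⟩ := Complex.isCoveringMap_exp.existsUnique_continuousMap_lifts
    (⟨fun x ↦ ⟨c (r x), h0 _⟩, by fun_prop⟩ : C(Fin n → ℝ, {z : ℂ // z ≠ 0})) 0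
    (Complex.log (c (r 0))) (by simp [Complex.exp_log (h0 _)])
  refine ⟨fun x ↦ F (e x), by fun_prop, fun x ↦ ?_⟩
  have := congrArg Subtype.val (congrFun h2 (e x))
  simpa [hre] using this

/-! ### Quaternions commuting with `i`, and conjugation -/

/-- The complex number `a + bi` attached to the quaternion `a + bi + cj + dk`. -/
def cpart (q : ℍ[ℝ]) : ℂ := ⟨q.re, q.imI⟩

lemma continuous_coeComplex : Continuous (Quaternion.coeComplex) := by
  have : Quaternion.coeComplex = fun z ↦ z.re • (1 : ℍ[ℝ]) + z.im • qi := by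
    funext z
    ext <;> simp
  rw [this]
  fun_prop

lemma continuous_cpart : Continuous cpart := by
  have : cpart = fun q ↦ (q.re : ℂ) + q.imI * Complex.I := by
    funext q
    apply Complex.ext <;> simp [cpart]
  rw [this]
  have := Quaternion.continuous_re
  have := Quaternion.continuous_imI
  fun_prop

lemma coeComplex_comm (z : ℂ) : (z : ℍ[ℝ]) * qi = qi * z := by
  ext <;> simp

lemma coeComplex_cpart {q : ℍ[ℝ]} (h : q * qi = qi * q) : (cpart q : ℍ[ℝ]) = q := by
  have hJ := congrArg (·.imJ) h
  have hK := congrArg (·.imK) h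
  simp at hJ hK
  ext
  · simp [cpart]
  · simp [cpart]
  · simp [cpart]; linarith
  · simp [cpart]; linarith

lemma coeComplex_ne_zero {z : ℂ} (h : z ≠ 0) : (z : ℍ[ℝ]) ≠ 0 := by
  intro h0
  apply h
  have h1 := congrArg (·.re) h0
  have h2 := congrArg (·.imI) h0
  simp at h1 h2
  exact Complex.ext h1 h2

lemma cpart_ne_zero {q : ℍ[ℝ]} (h : q * qi = qi * q) (h0 : q ≠ 0) : cpart q ≠ 0 := by
  intro h1
  apply h0
  rw [← coeComplex_cpart h, h1]
  exact map_zero Quaternion.ofComplex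

lemma coeComplex_one : ((1 : ℂ) : ℍ[ℝ]) = 1 := map_one Quaternion.ofComplex

lemma coeComplex_mul' (z w : ℂ) : ((z * w : ℂ) : ℍ[ℝ]) = z * w := map_mul Quaternion.ofComplex z w

lemma cpart_coe (z : ℂ) : cpart z = z := by
  apply Complex.ext <;> simp [cpart]

/-- Two lifts of the same element of the sphere of square roots of `-1` differ by an element
commuting with `i`. -/
lemma inv_mul_comm_qi {q q' a : ℍ[ℝ]} (h0 : q ≠ 0) (h : q * qi = a * q) (h' : q' * qi = a * q') :
    (q⁻¹ * q') * qi = qi * (q⁻¹ * q') := by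
  have : qi * q⁻¹ = q⁻¹ * a := by
    rw [eq_comm, inv_mul_eq_iff_eq_mul₀ h0, ← mul_assoc, h, mul_assoc, mul_inv_cancel₀ h0, mul_one]
  rw [mul_assoc, h', ← mul_assoc, ← mul_assoc, this]

lemma conj_sq {w : ℍ[ℝ]} (h : w ≠ 0) : (w * qi * w⁻¹) * (w * qi * w⁻¹) = -1 := by
  have : (w * qi * w⁻¹) * (w * qi * w⁻¹) = w * qi * (w⁻¹ * w) * qi * w⁻¹ := by
    simp only [mul_assoc]
  rw [this, inv_mul_cancel₀ h, mul_one, mul_assoc w, qi_mul_qi]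
  simp [h]

lemma conj_of_comm {w : ℍ[ℝ]} (h : w ≠ 0) (hc : w * qi = qi * w) : w * qi * w⁻¹ = qi := by
  rw [hc, mul_assoc, mul_inv_cancel₀ h, mul_one]

lemma conj_eq_of_lift {w a : ℍ[ℝ]} (h : w ≠ 0) (hc : w * qi = a * w) : w * qi * w⁻¹ = a := by
  rw [hc, mul_assoc, mul_inv_cancel₀ h, mul_one]

lemma lift_of_conj_eq {w a : ℍ[ℝ]} (h : w ≠ 0) (hc : w * qi * w⁻¹ = a) : w * qi = a * w := by
  rw [← hc, mul_assoc, inv_mul_cancel₀ h, mul_one]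

/-! ### Clamping and the boundary of the cube -/

/-- The coordinatewise retraction of `ℝⁿ` onto the unit cube. -/
noncomputable def clamp {n : ℕ} (x : Fin n → ℝ) : Fin n → I :=
  fun i ↦ Set.projIcc 0 1 zero_le_one (x i)

lemma uniformContinuous_clamp {n : ℕ} : UniformContinuous (clamp (n := n)) := by
  rw [uniformContinuous_pi]
  intro i
  have h1 : UniformContinuous (Set.projIcc (0 : ℝ) 1 zero_le_one) :=
    (LipschitzWith.projIcc zero_le_one).uniformContinuous
  exact h1.comp (Pi.uniformContinuous_proj _ i)

lemma clamp_coe {n : ℕ} (x : Fin n → I) : clamp (fun i ↦ (x i : ℝ)) = x :=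
  funext fun _ ↦ Set.projIcc_val _ _

lemma isClosed_boundary {n : ℕ} : IsClosed (Cube.boundary (Fin n)) := by
  have : Cube.boundary (Fin n) = ⋃ i, ({y | y i = 0} ∪ {y | y i = 1}) := by
    ext y; simp [Cube.boundary]
  rw [this]
  refine isClosed_iUnion_of_finite fun i ↦ ?_
  exact (isClosed_eq (by fun_prop) (by fun_prop)).union (isClosed_eq (by fun_prop) (by fun_prop))

lemma isPreconnected_boundary {n : ℕ} (hn : 2 ≤ n) : IsPreconnected (Cube.boundary (Fin n)) := by
  have hs : IsPreconnected (Metric.sphere (fun _ ↦ 1 / 2 : Fin n → ℝ) (1 / 2)) := by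
    apply isPreconnected_sphere
    rw [rank_fun']
    simpa using (show 1 < n by omega)
  have hne : (Finset.univ : Finset (Fin n)).Nonempty := ⟨⟨0, by omega⟩, Finset.mem_univ _⟩
  have : Cube.boundary (Fin n) = clamp '' Metric.sphere (fun _ ↦ 1 / 2 : Fin n → ℝ) (1 / 2) := by
    ext y
    constructor
    · rintro ⟨i, hi⟩
      refine ⟨fun i ↦ y i, ?_, clamp_coe y⟩
      rw [Metric.mem_sphere]
      apply le_antisymm
      · rw [dist_pi_le_iff (by norm_num)]
        intro j
        rw [Real.dist_eq, abs_le]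
        have := (y j).2.1
        have := (y j).2.2
        constructor <;> linarith
      · refine le_trans ?_ (dist_le_pi_dist _ _ i)
        rcases hi with hi | hi <;> rw [hi] <;> norm_num [Real.dist_eq]
    · rintro ⟨x, hx, rfl⟩
      rw [Metric.mem_sphere] at hx
      by_contra hb
      simp only [Cube.boundary, Set.mem_ofPred_eq, not_exists, not_or] at hb
      have : dist x (fun _ ↦ 1 / 2 : Fin n → ℝ) < 1 / 2 := by
        rw [dist_pi_lt_iff (by norm_num)]
        intro i
        obtain ⟨h0, h1⟩ := hb i
        have a0 : 0 < x i := by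
          by_contra h
          exact h0 (Set.projIcc_of_le_left _ (not_lt.1 h))
        have a1 : x i < 1 := by
          by_contra h
          exact h1 (Set.projIcc_of_right_le _ (not_lt.1 h))
        rw [Real.dist_eq, abs_lt]
        constructor <;> linarith
      linarith
  rw [this]
  exact hs.image _ uniformContinuous_clamp.continuous.continuousOn

/-- A continuous function whose exponential is `1` on a preconnected set is constant there. -/
lemma constant_of_exp_eq_one {X : Type*} [TopologicalSpace X] {S : Set X} (hS : IsPreconnected S)
    {l : X → ℂ} (hl : ContinuousOn l S) (h1 : ∀ x ∈ S, Complex.exp (l x) = 1) {x y : X}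
    (hx : x ∈ S) (hy : y ∈ S) : l x = l y := by
  have key : ∀ x ∈ S, ∀ y ∈ S, (l x).im ≤ (l y).im := by
    intro x hx y hy
    by_contra! hlt
    obtain ⟨a, ha⟩ := Complex.exp_eq_one_iff.1 (h1 x hx)
    obtain ⟨b, hb⟩ := Complex.exp_eq_one_iff.1 (h1 y hy)
    have hp := Real.pi_pos
    have hai : (l x).im = a * (2 * Real.pi) := by rw [ha]; simp
    have hbi : (l y).im = b * (2 * Real.pi) := by rw [hb]; simp
    have hab : b < a := by
      have : (b : ℝ) * (2 * Real.pi) < a * (2 * Real.pi) := by linarith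
      have := lt_of_mul_lt_mul_right this (by positivity)
      exact_mod_cast this
    have hab' : (b : ℝ) + 1 ≤ a := by exact_mod_cast hab
    obtain ⟨z, hz, hz2⟩ := hS.intermediate_value hy hx
      (f := fun x ↦ (l x).im) (Complex.continuous_im.comp_continuousOn hl)
      (show (b + 1 / 2 : ℝ) * (2 * Real.pi) ∈ _ from ⟨by simp only [hbi]; nlinarith,
        by simp only [hai]; nlinarith⟩)
    obtain ⟨c, hc⟩ := Complex.exp_eq_one_iff.1 (h1 z hz)
    have hci : (l z).im = c * (2 * Real.pi) := by rw [hc]; simp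
    simp only [hci] at hz2
    have : (c : ℝ) = b + 1 / 2 := mul_right_cancel₀ (by positivity) hz2
    have h2 : (2 * c : ℝ) = 2 * b + 1 := by linarith
    have : 2 * c = 2 * b + 1 := by exact_mod_cast h2
    omega
  apply Complex.ext
  · obtain ⟨a, ha⟩ := Complex.exp_eq_one_iff.1 (h1 x hx)
    obtain ⟨b, hb⟩ := Complex.exp_eq_one_iff.1 (h1 y hy)
    rw [ha, hb]; simp
  · exact le_antisymm (key x hx y hy) (key y hy x hx)

/-- A homotopy through square roots of `-1` from `w i w⁻¹` to the constant `i`, relative to the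
boundary of a cube of dimension at least two, lifts to a homotopy of quaternions from `w` to `1`
relative to the boundary. -/
lemma exists_lift_rel {n : ℕ} (hn : 2 ≤ n) (H : I × (Fin n → I) → ℍ[ℝ])
    (hH : Continuous H) (hsq : ∀ p, H p * H p = -1) (hH1 : ∀ y, H (1, y) = qi)
    (hHb : ∀ s, ∀ y ∈ Cube.boundary (Fin n), H (s, y) = qi)
    (w : (Fin n → I) → ℍ[ℝ]) (hw : Continuous w) (hw0 : ∀ y, w y ≠ 0)
    (hwb : ∀ y ∈ Cube.boundary (Fin n), w y = 1)
    (hwH : ∀ y, w y * qi = H (0, y) * w y) :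
    ∃ Q : I × (Fin n → I) → ℍ[ℝ], Continuous Q ∧ (∀ p, Q p ≠ 0) ∧ (∀ p, Q p * qi = H p * Q p) ∧
      (∀ y, Q (0, y) = w y) ∧ (∀ y, Q (1, y) = 1) ∧
      ∀ s, ∀ y ∈ Cube.boundary (Fin n), Q (s, y) = 1 := by
  obtain ⟨Q, h1, h2, h3, h4, h5⟩ := exists_lift H hH hsq w hw hw0 hwH
  have hQ1 : ∀ y, Q (1, y) * qi = qi * Q (1, y) := fun y ↦ by rw [h3, hH1]
  have hQb : ∀ s, ∀ y ∈ Cube.boundary (Fin n), Q (s, y) = 1 := by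
    intro s y hy
    rw [h5 y (fun s ↦ by rw [hHb _ _ hy, hHb _ _ hy]), hwb y hy]
  have hcc := continuous_cpart
  have hco := continuous_coeComplex
  obtain ⟨l, hl, hle⟩ := exists_log (fun y ↦ cpart (Q (1, y))) (by fun_prop)
    (fun y ↦ cpart_ne_zero (hQ1 y) (h2 _))
  let y0 : Fin n → I := fun _ ↦ 0
  have hy0 : y0 ∈ Cube.boundary (Fin n) := ⟨⟨0, by omega⟩, Or.inl rfl⟩
  have hb1 : ∀ y ∈ Cube.boundary (Fin n), Complex.exp (l y) = 1 := by
    intro y hy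
    rw [hle, hQb _ _ hy]
    apply Complex.ext <;> simp [cpart]
  have hlc : ∀ y ∈ Cube.boundary (Fin n), l y = l y0 := fun y hy ↦
    constant_of_exp_eq_one (isPreconnected_boundary hn) hl.continuousOn hb1 hy hy0
  -- the end of the lift `Q` is complex-valued; dividing by its logarithm, scaled by time, makes it `1`,
  -- and leaves the boundary fixed because the logarithm is constant there
  refine ⟨fun p ↦ Q p * (Complex.exp (-(p.1 : ℝ) * (l p.2 - l y0)) : ℂ), by fun_prop,
    fun p ↦ mul_ne_zero (h2 p) (coeComplex_ne_zero (Complex.exp_ne_zero _)), fun p ↦ ?_,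
    fun y ↦ ?_, fun y ↦ ?_, fun s y hy ↦ ?_⟩
  · rw [mul_assoc, coeComplex_comm, ← mul_assoc, h3, mul_assoc]
  · simp [h4]
  · have : Complex.exp (-((1 : I) : ℝ) * (l y - l y0)) = (Complex.exp (l y))⁻¹ := by
      rw [← Complex.exp_neg]
      simp only [Set.Icc.coe_one, Complex.ofReal_one]
      rw [show -(1 : ℂ) * (l y - l y0) = -l y + l y0 by ring, Complex.exp_add, hb1 y0 hy0, mul_one]
    simp only [this, hle]
    conv_lhs => rw [← coeComplex_cpart (hQ1 y)]
    rw [← coeComplex_mul', cpart_coe, mul_inv_cancel₀ (cpart_ne_zero (hQ1 y) (h2 _)),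
      coeComplex_one]
  · simp [hlc y hy, hQb s y hy]

/-! ### General position -/

/-- Continuous quaternion-valued functions on a compact uniform retract of a Euclidean space are
uniform limits of `C¹` functions. -/
lemma exists_smooth_approx {Y E : Type*} [PseudoMetricSpace Y] [CompactSpace Y]
    [NormedAddCommGroup E] [NormedSpace ℝ E] [FiniteDimensional ℝ E] {r : E → Y}
    (hr : UniformContinuous r) {e : Y → E} (hre : ∀ y, r (e y) = y) {f : Y → ℍ[ℝ]}
    (hf : Continuous f) {ε : ℝ} (hε : 0 < ε) :
    ∃ P : E → ℍ[ℝ], ContDiff ℝ 1 P ∧ ∀ y, ‖P (e y) - f y‖ < ε := by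
  have hfr : UniformContinuous (f ∘ r) :=
    (CompactSpace.uniformContinuous_of_continuous hf).comp hr
  obtain ⟨P, hP, hPd⟩ := hfr.exists_contDiff_dist_le hε
  refine ⟨P, hP.of_le (by exact_mod_cast le_top), fun y ↦ ?_⟩
  have := hPd (e y)
  rwa [Function.comp_apply, hre, dist_eq_norm] at this

/-- A quaternion-valued function on a cube of dimension less than four that is non-zero on a closed
set `A` can be changed off `A` so as to have no zeros. -/
lemma exists_nonvanishing {n : ℕ} (hn : n < 4) {A : Set (Fin n → I)} (hA : IsClosed A)
    {g : (Fin n → I) → ℍ[ℝ]} (hg : Continuous g) (hgA : ∀ y ∈ A, g y ≠ 0) :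
    ∃ h : (Fin n → I) → ℍ[ℝ], Continuous h ∧ (∀ y, h y ≠ 0) ∧ ∀ y ∈ A, h y = g y := by
  obtain ⟨ε, hε, hεA⟩ := hA.isCompact.exists_forall_le' (f := fun y ↦ ‖g y‖) (a := 0)
    (by fun_prop) (fun y hy ↦ norm_pos_iff.2 (hgA y hy))
  obtain ⟨P, hP, hPd⟩ := exists_smooth_approx uniformContinuous_clamp clamp_coe hg
    (show 0 < ε / 8 by positivity)
  have hd : Dense (Set.range P)ᶜ := hP.dense_compl_range_of_finrank_lt_finrank (by
    rw [Module.finrank_fin_fun, Quaternion.finrank_eq_four]; exact hn)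
  obtain ⟨v, hv, hvd⟩ := hd.exists_dist_lt 0 (show 0 < ε / 8 by positivity)
  rw [dist_zero_left] at hvd
  let e : (Fin n → I) → (Fin n → ℝ) := fun x i ↦ x i
  have he : Continuous e := by fun_prop
  have hPc := hP.continuous
  -- a `C¹` approximation of `g`, shifted by a small value `v` that it does not take
  let p : (Fin n → I) → ℍ[ℝ] := fun y ↦ P (e y) - v
  have hp0 : ∀ y, p y ≠ 0 := fun y h ↦ hv ⟨e y, sub_eq_zero.1 h⟩
  have hpd : ∀ y, ‖p y - g y‖ < ε / 4 := fun y ↦ by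
    have h1 := hPd y
    have h2 : p y - g y = (P (e y) - g y) - v := by simp only [p]; abel
    rw [h2]
    refine (norm_sub_le _ _).trans_lt ?_
    have : ‖P (e y) - g y‖ < ε / 8 := h1
    linarith
  obtain ⟨φ, hφ0, hφ1, hφ⟩ := exists_continuous_zero_one_of_isClosed
    (s := {y | ‖g y‖ ≤ ε / 2}) (t := A) (isClosed_le (by fun_prop) (by fun_prop)) hA
    (Set.disjoint_left.2 fun y hy hyA ↦ by
      have := hεA y hyA
      have hy : ‖g y‖ ≤ ε / 2 := hy
      linarith)
  refine ⟨fun y ↦ p y + φ y • (g y - p y), by fun_prop, fun y h ↦ ?_, fun y hy ↦ ?_⟩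
  · by_cases hy : ‖g y‖ ≤ ε / 2
    · have : φ y = 0 := hφ0 hy
      simp only [this, zero_smul, add_zero] at h
      exact hp0 y h
    · have h1 : g y = -((1 - φ y) • (p y - g y)) := by
        have : (p y + φ y • (g y - p y)) - (1 - φ y) • (p y - g y) = g y := by module
        rw [show p y + φ y • (g y - p y) = 0 from h, zero_sub] at this
        exact this.symm
      have h2 : ‖g y‖ ≤ ‖p y - g y‖ := by
        conv_lhs => rw [h1, norm_neg, norm_smul, Real.norm_eq_abs,
          abs_of_nonneg (by linarith [(hφ y).2])]
        exact mul_le_of_le_one_left (norm_nonneg _) (by linarith [(hφ y).1])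
      linarith [hpd y]
  · have : φ y = 1 := hφ1 hy
    simp [this]

/-! ### Loops of square roots of `-1` -/

/-- The model of the two-sphere as the space of quaternionic square roots of `-1`. -/
abbrev B : Type := {a : ℍ[ℝ] // a * a = -1}

/-- The basepoint `i`. -/
def bi : B := ⟨qi, qi_mul_qi⟩

/-- The class of a generalized loop in the homotopy group. -/
def cls {N X : Type*} [TopologicalSpace X] {x : X} (f : Ω^ N X x) : HomotopyGroup N X x :=
  Quotient.mk _ f

lemma cls_surj {N X : Type*} [TopologicalSpace X] {x : X} (a : HomotopyGroup N X x) :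
    ∃ f, cls f = a := Quotient.exists_rep a

lemma cls_eq {N X : Type*} [TopologicalSpace X] {x : X} {f g : Ω^ N X x} :
    cls f = cls g ↔ GenLoop.Homotopic f g := Quotient.eq

lemma cls_mul {N X : Type*} [TopologicalSpace X] {x : X} [DecidableEq N] [Nonempty N] (i : N)
    (f g : Ω^ N X x) : cls f * cls g = cls (GenLoop.transAt i g f) :=
  HomotopyGroup.mul_spec

/-- Descend a homotopy-invariant function to the homotopy group. -/
def clsLift {N X Z : Type*} [TopologicalSpace X] {x : X} (F : Ω^ N X x → Z)
    (hF : ∀ f g, GenLoop.Homotopic f g → F f = F g) : HomotopyGroup N X x → Z :=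
  Quotient.lift F hF

lemma clsLift_cls {N X Z : Type*} [TopologicalSpace X] {x : X} (F : Ω^ N X x → Z)
    (hF : ∀ f g, GenLoop.Homotopic f g → F f = F g) (f : Ω^ N X x) :
    clsLift F hF (cls f) = F f := rfl

/-- The generalized loop in `B` given by a quaternion-valued function. -/
def mkLoop {n : ℕ} (f : (Fin n → I) → ℍ[ℝ]) (hf : Continuous f) (hsq : ∀ y, f y * f y = -1)
    (hb : ∀ y ∈ Cube.boundary (Fin n), f y = qi) : Ω^ (Fin n) B bi :=
  ⟨⟨fun y ↦ ⟨f y, hsq y⟩, by fun_prop⟩, fun y hy ↦ Subtype.ext (hb y hy)⟩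

lemma mkLoop_apply {n : ℕ} (f : (Fin n → I) → ℍ[ℝ]) (hf : Continuous f)
    (hsq : ∀ y, f y * f y = -1) (hb : ∀ y ∈ Cube.boundary (Fin n), f y = qi) (y : Fin n → I) :
    (mkLoop f hf hsq hb y).1 = f y := rfl

lemma loop_continuous {n : ℕ} (f : Ω^ (Fin n) B bi) : Continuous fun y ↦ (f y).1 :=
  continuous_subtype_val.comp f.1.continuous

lemma loop_boundary {n : ℕ} (f : Ω^ (Fin n) B bi) {y : Fin n → I}
    (hy : y ∈ Cube.boundary (Fin n)) : (f y).1 = qi :=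
  congrArg Subtype.val (f.2 y hy)

lemma homotopic_mk {n : ℕ} {f g : Ω^ (Fin n) B bi} (H : I × (Fin n → I) → ℍ[ℝ])
    (hH : Continuous H) (hsq : ∀ p, H p * H p = -1) (h0 : ∀ y, H (0, y) = (f y).1)
    (h1 : ∀ y, H (1, y) = (g y).1) (hb : ∀ s, ∀ y ∈ Cube.boundary (Fin n), H (s, y) = qi) :
    GenLoop.Homotopic f g := by
  refine ⟨⟨⟨⟨fun p ↦ ⟨H p, hsq p⟩, by fun_prop⟩, fun y ↦ Subtype.ext (h0 y),
    fun y ↦ Subtype.ext (h1 y)⟩, fun s y hy ↦ Subtype.ext ?_⟩⟩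
  exact (hb s y hy).trans (loop_boundary f hy).symm

lemma exists_of_homotopic {n : ℕ} {f g : Ω^ (Fin n) B bi} (h : GenLoop.Homotopic f g) :
    ∃ H : I × (Fin n → I) → ℍ[ℝ], Continuous H ∧ (∀ p, H p * H p = -1) ∧
      (∀ y, H (0, y) = (f y).1) ∧ (∀ y, H (1, y) = (g y).1) ∧
      ∀ s, ∀ y ∈ Cube.boundary (Fin n), H (s, y) = qi := by
  obtain ⟨K⟩ := h
  refine ⟨fun p ↦ (K p).1, by fun_prop, fun p ↦ (K p).2, fun y ↦ ?_, fun y ↦ ?_, fun s y hy ↦ ?_⟩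
  · exact congrArg Subtype.val (K.apply_zero y)
  · exact congrArg Subtype.val (K.apply_one y)
  · exact (congrArg Subtype.val (K.eq_fst s hy)).trans (loop_boundary f hy)

/-- A homotopy of non-zero quaternions lifting two loops at its ends, and commuting with `i` on the
boundary of the cube, yields a homotopy of loops. -/
lemma homotopic_of_lift {n : ℕ} {f g : Ω^ (Fin n) B bi} (W : I × (Fin n → I) → ℍ[ℝ])
    (hW : Continuous W) (hW0 : ∀ p, W p ≠ 0) (h0 : ∀ y, W (0, y) * qi = (f y).1 * W (0, y))
    (h1 : ∀ y, W (1, y) * qi = (g y).1 * W (1, y))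
    (hb : ∀ s, ∀ y ∈ Cube.boundary (Fin n), W (s, y) * qi = qi * W (s, y)) :
    GenLoop.Homotopic f g :=
  homotopic_mk (fun p ↦ W p * qi * (W p)⁻¹) ((hW.mul continuous_const).mul (hW.inv₀ hW0))
    (fun p ↦ conj_sq (hW0 p))
    (fun y ↦ conj_eq_of_lift (hW0 _) (h0 y)) (fun y ↦ conj_eq_of_lift (hW0 _) (h1 y))
    (fun s y hy ↦ conj_of_comm (hW0 _) (hb s y hy))

/-- The loop `w i w⁻¹`. -/
noncomputable def conjLoop {n : ℕ} (w : (Fin n → I) → ℍ[ℝ]) (hw : Continuous w)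
    (hw0 : ∀ y, w y ≠ 0) (hb : ∀ y ∈ Cube.boundary (Fin n), w y * qi = qi * w y) :
    Ω^ (Fin n) B bi :=
  mkLoop (fun y ↦ w y * qi * (w y)⁻¹) ((hw.mul continuous_const).mul (hw.inv₀ hw0))
    (fun y ↦ conj_sq (hw0 y)) (fun y hy ↦ conj_of_comm (hw0 y) (hb y hy))

lemma conjLoop_lift {n : ℕ} (w : (Fin n → I) → ℍ[ℝ]) (hw : Continuous w)
    (hw0 : ∀ y, w y ≠ 0) (hb : ∀ y ∈ Cube.boundary (Fin n), w y * qi = qi * w y) (y : Fin n → I) :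
    w y * qi = (conjLoop w hw hw0 hb y).1 * w y :=
  lift_of_conj_eq (hw0 y) rfl

/-! ### The second homotopy group -/

/-- The loop of winding number `n` prescribed on the boundary of the square: it runs through
`exp (2 π i n u)` on the side `t = 1` and is `1` on the other three sides. -/
noncomputable def bd (n : ℤ) (y : Fin 2 → I) : ℂ :=
  1 + (y 1 : ℝ) * (Complex.exp (2 * Real.pi * Complex.I * n * (y 0 : ℝ)) - 1)

lemma continuous_bd (n : ℤ) : Continuous (bd n) := by
  unfold bd; fun_prop

lemma exp_two_pi_int (n : ℤ) : Complex.exp (2 * Real.pi * Complex.I * n) = 1 := by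
  rw [Complex.exp_eq_one_iff]
  exact ⟨n, by ring⟩

lemma bd_u0 (n : ℤ) {y : Fin 2 → I} (h : y 0 = 0) : bd n y = 1 := by
  simp [bd, h]

lemma bd_u1 (n : ℤ) {y : Fin 2 → I} (h : y 0 = 1) : bd n y = 1 := by
  simp [bd, h, exp_two_pi_int]

lemma bd_t0 (n : ℤ) {y : Fin 2 → I} (h : y 1 = 0) : bd n y = 1 := by
  simp [bd, h]

lemma bd_t1 (n : ℤ) {y : Fin 2 → I} (h : y 1 = 1) :
    bd n y = Complex.exp (2 * Real.pi * Complex.I * n * (y 0 : ℝ)) := by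
  simp [bd, h]

lemma boundary_two {y : Fin 2 → I} (hy : y ∈ Cube.boundary (Fin 2)) :
    y 0 = 0 ∨ y 0 = 1 ∨ y 1 = 0 ∨ y 1 = 1 := by
  obtain ⟨i, hi⟩ := hy
  fin_cases i
  · exact hi.elim Or.inl (fun h ↦ Or.inr (Or.inl h))
  · exact Or.inr (Or.inr hi)

lemma bd_ne_zero (n : ℤ) {y : Fin 2 → I} (hy : y ∈ Cube.boundary (Fin 2)) : bd n y ≠ 0 := by
  rcases boundary_two hy with h | h | h | h
  · simp [bd_u0 n h]
  · simp [bd_u1 n h]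
  · simp [bd_t0 n h]
  · rw [bd_t1 n h]; exact Complex.exp_ne_zero _

/-- The loop `f` has degree `n`: it lifts along `q ↦ q i q⁻¹` to a map of the square whose boundary
values wind `n` times. -/
def HasDeg (f : Ω^ (Fin 2) B bi) (n : ℤ) : Prop :=
  ∃ q : (Fin 2 → I) → ℍ[ℝ], Continuous q ∧ (∀ y, q y ≠ 0) ∧ (∀ y, q y * qi = (f y).1 * q y) ∧
    ∀ y ∈ Cube.boundary (Fin 2), q y = bd n y

/-- Lift in the direction of coordinate `1`, starting from `1`. On the final side the lift is a loop in
the non-zero complex numbers; its logarithm allows straightening it to a standard winding. -/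
lemma exists_hasDeg (f : Ω^ (Fin 2) B bi) : ∃ n, HasDeg f n := by
  have hf := loop_continuous f
  have hm : Continuous fun p : I × I ↦ (![p.2, p.1] : Fin 2 → I) := by
    refine continuous_pi fun i ↦ ?_
    fin_cases i <;> simp <;> fun_prop
  have hfb : ∀ t u : I, (t = 0 ∨ t = 1 ∨ u = 0 ∨ u = 1) → (f ![u, t]).1 = qi := by
    intro t u h
    refine loop_boundary f ?_
    rcases h with h | h | h | h
    · exact ⟨1, Or.inl h⟩
    · exact ⟨1, Or.inr h⟩
    · exact ⟨0, Or.inl h⟩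
    · exact ⟨0, Or.inr h⟩
  obtain ⟨Q, h1, h2, h3, h4, h5⟩ := exists_lift (Y := I) (fun p ↦ (f ![p.2, p.1]).1)
    (hf.comp hm) (fun p ↦ (f _).2) (fun _ ↦ 1) continuous_const (fun _ ↦ one_ne_zero)
    (fun u ↦ by simp [hfb 0 u (Or.inl rfl)])
  have hQ1 : ∀ u, Q (1, u) * qi = qi * Q (1, u) := fun u ↦ by
    rw [h3]; simp [hfb 1 u (Or.inr (Or.inl rfl))]
  have hQu0 : ∀ t, Q (t, 0) = 1 := h5 0 (fun s ↦ by
    simp only [hfb s 0 (by simp), hfb 0 0 (by simp)])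
  have hQu1 : ∀ t, Q (t, 1) = 1 := h5 1 (fun s ↦ by
    simp only [hfb s 1 (by simp), hfb 0 1 (by simp)])
  have hcc := continuous_cpart
  have hco := continuous_coeComplex
  obtain ⟨l', hl', hle'⟩ := exists_log (n := 1) (fun y ↦ cpart (Q (1, y 0))) (by fun_prop)
    (fun y ↦ cpart_ne_zero (hQ1 _) (h2 _))
  let l : I → ℂ := fun u ↦ l' (fun _ ↦ u)
  have hl : Continuous l := by fun_prop
  have hle : ∀ u, Complex.exp (l u) = cpart (Q (1, u)) := fun u ↦ hle' _
  have hc1 : cpart 1 = 1 := by apply Complex.ext <;> simp [cpart]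
  have hl0 : Complex.exp (l 0) = 1 := by rw [hle, hQu0, hc1]
  have hl1 : Complex.exp (l 1 - l 0) = 1 := by rw [Complex.exp_sub, hle, hQu1, hc1, hl0, div_one]
  obtain ⟨n, hn⟩ := Complex.exp_eq_one_iff.1 hl1
  refine ⟨n, fun y ↦ Q (y 1, y 0) * (Complex.exp (-(y 1 : ℝ) * (l (y 0) - l 0 -
    2 * Real.pi * Complex.I * n * (y 0 : ℝ))) : ℂ), by fun_prop,
    fun y ↦ mul_ne_zero (h2 _) (coeComplex_ne_zero (Complex.exp_ne_zero _)), fun y ↦ ?_,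
    fun y hy ↦ ?_⟩
  · rw [mul_assoc, coeComplex_comm, ← mul_assoc, h3, mul_assoc]
    have : (![y 0, y 1] : Fin 2 → I) = y := by
      ext i; fin_cases i <;> rfl
    simp only [this]
  · rcases boundary_two hy with h | h | h | h
    · simp [bd_u0 n h, h, hQu0]
    · simp only
      rw [bd_u1 n h, h, hQu1, hn]
      simp [show (n : ℂ) * (2 * Real.pi * Complex.I) - 2 * Real.pi * Complex.I * n = 0 by ring]
    · simp [bd_t0 n h, h, h4]
    · simp only
      rw [bd_t1 n h, h]
      conv_lhs => rw [← coeComplex_cpart (hQ1 (y 0))]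
      rw [← hle, ← coeComplex_mul', ← Complex.exp_add]
      congr 1
      simp only [Set.Icc.coe_one, Complex.ofReal_one]
      rw [show l (y 0) + -1 * (l (y 0) - l 0 - 2 * Real.pi * Complex.I * n * (y 0 : ℝ)) =
        l 0 + 2 * Real.pi * Complex.I * n * (y 0 : ℝ) by ring, Complex.exp_add, hl0, one_mul]

/-- The degree is a homotopy invariant, since lifts of homotopies are stationary on the boundary. -/
lemma HasDeg.of_homotopic {f g : Ω^ (Fin 2) B bi} {n : ℤ} (hf : HasDeg f n)
    (h : GenLoop.Homotopic f g) : HasDeg g n := by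
  obtain ⟨H, hH, hsq, h0, h1, hb⟩ := exists_of_homotopic h
  obtain ⟨q, hq, hq0, hqf, hqb⟩ := hf
  obtain ⟨Q, k1, k2, k3, k4, k5⟩ := exists_lift H hH hsq q hq hq0 (fun y ↦ by rw [hqf, h0])
  refine ⟨fun y ↦ Q (1, y), by fun_prop, fun y ↦ k2 _, fun y ↦ by rw [k3, h1], fun y hy ↦ ?_⟩
  simp only
  rw [k5 y (fun s ↦ by rw [hb _ _ hy, hb _ _ hy]), hqb y hy]

/-- Two lifts differ by a function to the non-zero complex numbers, which has a logarithm on the whole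
square; following this logarithm along the four sides compares the winding numbers. -/
lemma HasDeg.unique {f : Ω^ (Fin 2) B bi} {n m : ℤ} (hn : HasDeg f n) (hm : HasDeg f m) :
    n = m := by
  obtain ⟨q, hq, hq0, hqf, hqb⟩ := hn
  obtain ⟨q', hq', hq0', hqf', hqb'⟩ := hm
  have hcc := continuous_cpart
  have hinv : Continuous fun y ↦ (q y)⁻¹ := hq.inv₀ hq0
  have hcomm := fun y ↦ inv_mul_comm_qi (hq0 y) (hqf y) (hqf' y)
  obtain ⟨l, hl, hle⟩ := exists_log (fun y ↦ cpart ((q y)⁻¹ * q' y)) (by fun_prop)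
    (fun y ↦ cpart_ne_zero (hcomm y) (mul_ne_zero (inv_ne_zero (hq0 y)) (hq0' y)))
  have hlb : ∀ y ∈ Cube.boundary (Fin 2), Complex.exp (l y) * bd n y = bd m y := by
    intro y hy
    have h1 : ((Complex.exp (l y) : ℂ) : ℍ[ℝ]) = (q y)⁻¹ * q' y := by
      rw [hle, coeComplex_cpart (hcomm y)]
    rw [hqb y hy, hqb' y hy, eq_inv_mul_iff_mul_eq₀ (coeComplex_ne_zero (bd_ne_zero n hy)),
      ← coeComplex_mul'] at h1
    have := congrArg cpart h1
    rw [cpart_coe, cpart_coe] at this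
    rw [mul_comm, this]
  have hv : ∀ {a b : I → I} (_ : Continuous a) (_ : Continuous b),
      Continuous fun u ↦ (![a u, b u] : Fin 2 → I) := by
    intro a b ha hb
    refine continuous_pi fun i ↦ ?_
    fin_cases i <;> simp <;> assumption
  have hU : IsPreconnected (Set.univ : Set I) := isPreconnected_univ
  have e1 : l ![0, 0] = l ![0, 1] :=
    constant_of_exp_eq_one hU (l := fun t ↦ l ![0, t])
      ((hl.comp (hv continuous_const continuous_id)).continuousOn) (fun t _ ↦ by
        have := hlb ![0, t] ⟨0, Or.inl rfl⟩
        rwa [bd_u0 _ rfl, bd_u0 _ rfl, mul_one] at this) trivial trivial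
  have e2 : l ![1, 0] = l ![1, 1] :=
    constant_of_exp_eq_one hU (l := fun t ↦ l ![1, t])
      ((hl.comp (hv continuous_const continuous_id)).continuousOn) (fun t _ ↦ by
        have := hlb ![1, t] ⟨0, Or.inr rfl⟩
        rwa [bd_u1 _ rfl, bd_u1 _ rfl, mul_one] at this) trivial trivial
  have e3 : l ![0, 0] = l ![1, 0] :=
    constant_of_exp_eq_one hU (l := fun u ↦ l ![u, 0])
      ((hl.comp (hv continuous_id continuous_const)).continuousOn) (fun u _ ↦ by
        have := hlb ![u, 0] ⟨1, Or.inl rfl⟩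
        rwa [bd_t0 _ rfl, bd_t0 _ rfl, mul_one] at this) trivial trivial
  have hl4 := hl.comp (hv continuous_id continuous_const (b := fun _ ↦ 1))
  have e4 := constant_of_exp_eq_one hU
    (l := fun u : I ↦ l ![u, 1] - 2 * Real.pi * Complex.I * (m - n) * (u : ℝ))
    (Continuous.continuousOn (hl4.sub (by fun_prop))) (fun u _ ↦ by
        have := hlb ![u, 1] ⟨1, Or.inr rfl⟩
        rw [bd_t1 _ rfl, bd_t1 _ rfl] at this
        rw [Complex.exp_sub, div_eq_one_iff_eq (Complex.exp_ne_zero _)]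
        apply mul_right_cancel₀ (Complex.exp_ne_zero (2 * Real.pi * Complex.I * n * (u : ℝ)))
        refine this.trans ?_
        rw [← Complex.exp_add]
        congr 1
        simp
        ring) (x := 0) (y := 1) trivial trivial
  simp only [← e1, e3, ← e2] at e4
  simp only [Set.Icc.coe_zero, Complex.ofReal_zero, mul_zero, sub_zero, Set.Icc.coe_one,
    Complex.ofReal_one, mul_one] at e4
  have h5 : (2 * Real.pi * Complex.I : ℂ) * (m - n) = 0 := by linear_combination e4
  rcases mul_eq_zero.1 h5 with h | h
  · exact absurd h Complex.two_pi_I_ne_zero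
  · have : (m : ℂ) = n := sub_eq_zero.1 h
    exact_mod_cast this.symm

/-- Loops of the same degree are homotopic: interpolating linearly between their lifts gives a function
on the three-cube without zeros on the boundary, and general position removes the zeros inside. -/
lemma HasDeg.homotopic {f g : Ω^ (Fin 2) B bi} {n : ℤ} (hf : HasDeg f n) (hg : HasDeg g n) :
    GenLoop.Homotopic f g := by
  obtain ⟨q, hq, hq0, hqf, hqb⟩ := hf
  obtain ⟨q', hq', hq0', hqf', hqb'⟩ := hg
  have htl : Continuous fun y : Fin 3 → I ↦ (Fin.tail y : Fin 2 → I) := by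
    unfold Fin.tail; fun_prop
  have hcs : Continuous fun p : I × (Fin 2 → I) ↦ (Fin.cons p.1 p.2 : Fin 3 → I) := by
    refine continuous_pi fun i ↦ ?_
    refine Fin.cases ?_ (fun j ↦ ?_) i <;> simp <;> fun_prop
  let G : (Fin 3 → I) → ℍ[ℝ] := fun y ↦
    (1 - (y 0 : ℝ)) • q (Fin.tail y) + (y 0 : ℝ) • q' (Fin.tail y)
  have hGs : ∀ y : Fin 3 → I, (Fin.tail y : Fin 2 → I) ∈ Cube.boundary (Fin 2) →
      G y = bd n (Fin.tail y : Fin 2 → I) := by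
    intro y hy
    simp only [G, hqb _ hy, hqb' _ hy]
    module
  have hGb : ∀ y ∈ Cube.boundary (Fin 3), G y ≠ 0 := by
    rintro y ⟨i, hi⟩
    induction i using Fin.cases with
    | zero =>
      rcases hi with hi | hi
      · simpa [G, hi] using hq0 _
      · simpa [G, hi] using hq0' _
    | succ j =>
      have : Fin.tail y ∈ Cube.boundary (Fin 2) := ⟨j, hi⟩
      rw [hGs y this]
      exact coeComplex_ne_zero (bd_ne_zero n this)
  obtain ⟨h, hh, hh0, hhG⟩ := exists_nonvanishing (by norm_num) isClosed_boundary
    (show Continuous G by fun_prop) hGb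
  refine homotopic_of_lift (fun p ↦ h (Fin.cons p.1 p.2)) (hh.comp hcs) (fun p ↦ hh0 _)
    (fun y ↦ ?_) (fun y ↦ ?_) (fun s y hy ↦ ?_)
  · have : h (Fin.cons 0 y) = q y := by
      rw [hhG _ ⟨0, Or.inl rfl⟩]; simp [G]
    simp only [this, hqf]
  · have : h (Fin.cons 1 y) = q' y := by
      rw [hhG _ ⟨0, Or.inr rfl⟩]; simp [G]
    simp only [this, hqf']
  · obtain ⟨i, hi⟩ := hy
    simp only
    rw [hhG _ ⟨i.succ, by simpa using hi⟩, hGs _ (by simpa using ⟨i, hi⟩)]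
    exact coeComplex_comm _

/-- The prescribed boundary values extend over the square without zeros by general position. -/
lemma exists_of_deg (n : ℤ) : ∃ f : Ω^ (Fin 2) B bi, HasDeg f n := by
  obtain ⟨h, hh, hh0, hhG⟩ := exists_nonvanishing (n := 2) (by norm_num) isClosed_boundary
    (continuous_coeComplex.comp (continuous_bd n)) (fun y hy ↦ coeComplex_ne_zero (bd_ne_zero n hy))
  refine ⟨conjLoop h hh hh0 (fun y hy ↦ ?_), h, hh, hh0, conjLoop_lift h hh hh0 _, hhG⟩
  rw [hhG y hy]
  exact coeComplex_comm _

lemma transAt_val {n : ℕ} (i : Fin n) (f g : Ω^ (Fin n) B bi) (y : Fin n → I) :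
    (GenLoop.transAt i f g y).1 = if (y i : ℝ) ≤ 1 / 2
      then (f (Function.update y i <| Set.projIcc 0 1 zero_le_one (2 * y i))).1
      else (g (Function.update y i <| Set.projIcc 0 1 zero_le_one (2 * y i - 1))).1 := by
  rw [GenLoop.transAt, GenLoop.coe_copy]
  split_ifs <;> rfl

/-- The degree is additive: the lifts are glued side by side, and multiplied by the exponential of `l`
to make the boundary values run at constant speed. -/
lemma HasDeg.trans {f g : Ω^ (Fin 2) B bi} {n m : ℤ} (hf : HasDeg f n) (hg : HasDeg g m) :
    HasDeg (GenLoop.transAt 0 f g) (n + m) := by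
  obtain ⟨q, hq, hq0, hqf, hqb⟩ := hf
  obtain ⟨q', hq', hq0', hqf', hqb'⟩ := hg
  have hco := continuous_coeComplex
  let a : (Fin 2 → I) → (Fin 2 → I) := fun y ↦
    Function.update y 0 <| Set.projIcc 0 1 zero_le_one (2 * y 0)
  let b : (Fin 2 → I) → (Fin 2 → I) := fun y ↦
    Function.update y 0 <| Set.projIcc 0 1 zero_le_one (2 * y 0 - 1)
  have ha : Continuous a := by fun_prop
  have hb : Continuous b := by fun_prop
  let Q : (Fin 2 → I) → ℍ[ℝ] := fun y ↦ if (y 0 : ℝ) ≤ 1 / 2 then q (a y) else q' (b y)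
  have hQ : Continuous Q := by
    refine Continuous.if_le (by fun_prop) (by fun_prop) (by fun_prop) (by fun_prop) fun y hy ↦ ?_
    have h1 : a y 0 = 1 := by
      simp [a, hy]
    have h2 : b y 0 = 0 := by
      simp [b, hy]
    rw [hqb _ ⟨0, Or.inr h1⟩, hqb' _ ⟨0, Or.inl h2⟩, bd_u1 n h1, bd_u0 m h2]
  let l : (Fin 2 → I) → ℂ := fun y ↦ (y 1 : ℝ) * (2 * Real.pi * Complex.I * ((n + m) * (y 0 : ℝ)
    - n * (min (2 * (y 0 : ℝ)) 1 : ℝ) - m * (max (2 * (y 0 : ℝ) - 1) 0 : ℝ)))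
  have hl : Continuous l := by fun_prop
  refine ⟨fun y ↦ Q y * (Complex.exp (l y) : ℂ), by fun_prop, fun y ↦ mul_ne_zero ?_
    (coeComplex_ne_zero (Complex.exp_ne_zero _)), fun y ↦ ?_, fun y hy ↦ ?_⟩
  · simp only [Q]
    split_ifs
    · exact hq0 _
    · exact hq0' _
  · rw [mul_assoc, coeComplex_comm, ← mul_assoc, ← mul_assoc, transAt_val]
    congr 1
    simp only [Q]
    split_ifs
    · exact hqf _
    · exact hqf' _
  · have ha1 : a y 1 = y 1 := by simp [a]
    have hb1 : b y 1 = y 1 := by simp [b]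
    have h01 := (y 0).2.1
    have h02 := (y 0).2.2
    rcases boundary_two hy with h | h | h | h
    · have hQ1 : Q y = 1 := by
        have h0 : a y 0 = 0 := by simp [a, h]
        have : Q y = q (a y) := if_pos (by simp [h])
        rw [this, hqb _ ⟨0, Or.inl h0⟩, bd_u0 _ h0, coeComplex_one]
      have hl1 : l y = 0 := by simp [l, h]
      simp only
      rw [hQ1, hl1, bd_u0 _ h, Complex.exp_zero, coeComplex_one, mul_one]
    · have hQ1 : Q y = 1 := by
        have h0 : b y 0 = 1 := by
          simp only [b, h, Function.update_self]
          exact Set.projIcc_of_right_le _ (by norm_num)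
        have : Q y = q' (b y) := if_neg (by simp [h]; norm_num)
        rw [this, hqb' _ ⟨0, Or.inr h0⟩, bd_u1 _ h0, coeComplex_one]
      have hl1 : l y = 0 := by
        simp only [l, h]; norm_num
      simp only
      rw [hQ1, hl1, bd_u1 _ h, Complex.exp_zero, coeComplex_one, mul_one]
    · have hQ1 : Q y = 1 := by
        simp only [Q]
        split_ifs
        · rw [hqb _ ⟨1, Or.inl (ha1.trans h)⟩, bd_t0 _ (ha1.trans h), coeComplex_one]
        · rw [hqb' _ ⟨1, Or.inl (hb1.trans h)⟩, bd_t0 _ (hb1.trans h), coeComplex_one]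
      have hl1 : l y = 0 := by simp [l, h]
      simp only
      rw [hQ1, hl1, bd_t0 _ h, Complex.exp_zero, coeComplex_one, mul_one]
    · rw [bd_t1 _ h]
      simp only [Q]
      split_ifs with hu
      · have hau : ((a y 0 : I) : ℝ) = 2 * y 0 := by
          simp only [a, Function.update_self]
          rw [Set.projIcc_of_mem _ (show 2 * (y 0 : ℝ) ∈ Set.Icc 0 1 from
            ⟨by linarith, by linarith⟩)]
        rw [hqb _ ⟨1, Or.inr (ha1.trans h)⟩, bd_t1 _ (ha1.trans h), ← coeComplex_mul',
          ← Complex.exp_add, hau]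
        congr 2
        simp only [l, h]
        rw [min_eq_left (by linarith), max_eq_right (by linarith)]
        push_cast
        ring
      · have hbu : ((b y 0 : I) : ℝ) = 2 * y 0 - 1 := by
          simp only [b, Function.update_self]
          rw [Set.projIcc_of_mem _ (show 2 * (y 0 : ℝ) - 1 ∈ Set.Icc 0 1 from
            ⟨by linarith, by linarith⟩)]
        rw [hqb' _ ⟨1, Or.inr (hb1.trans h)⟩, bd_t1 _ (hb1.trans h), ← coeComplex_mul',
          ← Complex.exp_add, hbu]
        congr 1
        rw [← mul_one (Complex.exp (_ + _)), ← exp_two_pi_int n, ← Complex.exp_add]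
        congr 1
        simp only [l, h]
        rw [min_eq_right (by linarith), max_eq_left (by linarith)]
        push_cast
        ring

/-- The second homotopy group of `B` is infinite cyclic, by the degree. -/
lemma pi_two : Nonempty (π_ 2 B bi ≃* Multiplicative ℤ) := by
  choose d hd using exists_hasDeg
  let D : π_ 2 B bi → Multiplicative ℤ := clsLift (fun f ↦ Multiplicative.ofAdd (d f))
    (fun f g h ↦ congrArg _ (((hd f).of_homotopic h).unique (hd g)))
  have hmul : ∀ x y, D (x * y) = D x * D y := by
    intro x y
    obtain ⟨f, rfl⟩ := cls_surj x
    obtain ⟨g, rfl⟩ := cls_surj y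
    rw [cls_mul 0]
    change Multiplicative.ofAdd (d _) = Multiplicative.ofAdd (d f + d g)
    rw [(hd _).unique ((hd g).trans (hd f)), add_comm]
  refine ⟨MulEquiv.ofBijective (MonoidHom.mk' D hmul) ⟨?_, ?_⟩⟩
  · intro x y hxy
    obtain ⟨f, rfl⟩ := cls_surj x
    obtain ⟨g, rfl⟩ := cls_surj y
    have h1 : d f = d g := hxy
    exact cls_eq.2 ((hd f).homotopic (h1 ▸ hd g))
  · intro k
    obtain ⟨f, hf⟩ := exists_of_deg k.toAdd
    exact ⟨cls f, congrArg Multiplicative.ofAdd ((hd f).unique hf)⟩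

/-! ### Separating the positive and the negative real axis -/

lemma norm_sq_eq (q : ℍ[ℝ]) : ‖q‖ ^ 2 = q.re ^ 2 + ‖q.im‖ ^ 2 := by
  rw [sq, sq ‖q.im‖, ← Quaternion.normSq_eq_norm_mul_self, ← Quaternion.normSq_eq_norm_mul_self,
    Quaternion.normSq_def', Quaternion.normSq_def']
  simp
  ring

lemma abs_re_le (q : ℍ[ℝ]) : |q.re| ≤ ‖q‖ :=
  abs_le_of_sq_le_sq (by nlinarith [norm_sq_eq q, sq_nonneg ‖q.im‖]) (norm_nonneg q)

lemma norm_im_le (q : ℍ[ℝ]) : ‖q.im‖ ≤ ‖q‖ :=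
  (le_abs_self _).trans
    (abs_le_of_sq_le_sq (by nlinarith [norm_sq_eq q, sq_nonneg q.re]) (norm_nonneg q))

lemma norm_le_re_add_im (q : ℍ[ℝ]) : ‖q‖ ≤ |q.re| + ‖q.im‖ := by
  have h := norm_sq_eq q
  rw [← sq_abs q.re] at h
  nlinarith [abs_nonneg q.re, norm_nonneg q.im, norm_nonneg q]

/-- `q` lies on the half-line of non-positive reals. -/
def IsNeg (q : ℍ[ℝ]) : Prop := q.im = 0 ∧ q.re ≤ 0

/-- `q` lies on the half-line of non-negative reals. -/
def IsPos (q : ℍ[ℝ]) : Prop := q.im = 0 ∧ 0 ≤ q.re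

lemma isClosed_isNeg : IsClosed {q | IsNeg q} :=
  (isClosed_eq Quaternion.continuous_im continuous_const).inter
    (isClosed_le Quaternion.continuous_re continuous_const)

lemma isClosed_isPos : IsClosed {q | IsPos q} :=
  (isClosed_eq Quaternion.continuous_im continuous_const).inter
    (isClosed_le continuous_const Quaternion.continuous_re)

/-- The broken line from `1` through `x` to `-1`, parametrized affinely on each half of the unit
interval. -/
noncomputable def arc (x : ℍ[ℝ]) (t : I) : ℍ[ℝ] :=
  (1 - 2 * (t : ℝ)) • (1 : ℍ[ℝ]) + (1 - |2 * (t : ℝ) - 1|) • x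

lemma arc_zero (x : ℍ[ℝ]) : arc x 0 = 1 := by simp [arc]

lemma arc_one (x : ℍ[ℝ]) : arc x 1 = -1 := by
  simp [arc]; norm_num

lemma continuous_arc : Continuous fun p : ℍ[ℝ] × I ↦ arc p.1 p.2 := by
  unfold arc; fun_prop

lemma arc_half {x : ℍ[ℝ]} {t : I} (h : (t : ℝ) = 1 / 2) : arc x t = x := by
  simp [arc, h]

lemma eq_zero_or_one_of_arc {x : ℍ[ℝ]} (hx : x.im ≠ 0) {t : I} (h : (arc x t).im = 0) :
    t = 0 ∨ t = 1 := by
  simp only [arc, Quaternion.im_add, Quaternion.im_smul, Quaternion.im_one, smul_zero, zero_add,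
    smul_eq_zero, hx, or_false] at h
  have h1 : |2 * (t : ℝ) - 1| = 1 := by linarith
  rcases (abs_eq zero_le_one).1 h1 with h2 | h2
  · exact Or.inr (Subtype.ext (show (t : ℝ) = 1 by linarith))
  · exact Or.inl (Subtype.ext (show (t : ℝ) = 0 by linarith))

lemma arc_ne_zero {x : ℍ[ℝ]} (hx : x.im ≠ 0) (t : I) : arc x t ≠ 0 := by
  intro h
  rcases eq_zero_or_one_of_arc hx (t := t) (by rw [h]; rfl) with rfl | rfl
  · rw [arc_zero] at h; exact one_ne_zero h
  · rw [arc_one] at h; simp at h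

lemma not_isNeg_one : ¬ IsNeg 1 := by
  rintro ⟨-, h⟩; simp at h; linarith

lemma not_isPos_neg_one : ¬ IsPos (-1) := by
  rintro ⟨-, h⟩; simp at h; linarith

lemma eq_one_of_isNeg_arc {x : ℍ[ℝ]} (hx : x.im ≠ 0) {t : I} (h : IsNeg (arc x t)) : t = 1 := by
  rcases eq_zero_or_one_of_arc hx h.1 with rfl | rfl
  · rw [arc_zero] at h; exact absurd h not_isNeg_one
  · rfl

lemma eq_zero_of_isPos_arc {x : ℍ[ℝ]} (hx : x.im ≠ 0) {t : I} (h : IsPos (arc x t)) : t = 0 := by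
  rcases eq_zero_or_one_of_arc hx h.1 with rfl | rfl
  · rfl
  · rw [arc_one] at h; exact absurd h not_isPos_neg_one

/-- A continuous measure of how far `(a, b)` is from consisting of a non-positive and a
non-negative real. -/
noncomputable def defect (a b : ℍ[ℝ]) : ℝ := ‖a.im‖ + ‖b.im‖ + max a.re 0 + max (-b.re) 0

lemma continuous_defect : Continuous fun p : ℍ[ℝ] × ℍ[ℝ] ↦ defect p.1 p.2 := by
  have h1 := Quaternion.continuous_im
  have h2 := Quaternion.continuous_re
  unfold defect
  fun_prop

lemma defect_nonneg (a b : ℍ[ℝ]) : 0 ≤ defect a b := by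
  unfold defect; positivity

lemma defect_eq_zero {a b : ℍ[ℝ]} (h : defect a b ≤ 0) : IsNeg a ∧ IsPos b := by
  unfold defect at h
  have h1 := norm_nonneg a.im
  have h2 := norm_nonneg b.im
  have h3 := le_max_right a.re 0
  have h4 := le_max_right (-b.re) 0
  have h5 := le_max_left a.re 0
  have h6 := le_max_left (-b.re) 0
  exact ⟨⟨norm_le_zero_iff.1 (by linarith), by linarith⟩,
    ⟨norm_le_zero_iff.1 (by linarith), by linarith⟩⟩

lemma defect_le {a b a' b' : ℍ[ℝ]} {η : ℝ} (ha : IsNeg a') (hb : IsPos b')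
    (h1 : ‖a' - a‖ ≤ η) (h2 : ‖b' - b‖ ≤ η) : defect a b ≤ 4 * η := by
  have e1 := norm_im_le (a' - a)
  have e2 := norm_im_le (b' - b)
  have e3 := abs_le.1 (abs_re_le (a' - a))
  have e4 := abs_le.1 (abs_re_le (b' - b))
  rw [Quaternion.im_sub, ha.1, zero_sub, norm_neg] at e1
  rw [Quaternion.im_sub, hb.1, zero_sub, norm_neg] at e2
  rw [Quaternion.re_sub] at e3 e4
  have := ha.2
  have := hb.2
  have := (norm_nonneg (a' - a)).trans h1
  have m1 : max a.re 0 ≤ η := max_le (by linarith) (by linarith)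
  have m2 : max (-b.re) 0 ≤ η := max_le (by linarith) (by linarith)
  unfold defect
  linarith

/-- General position for one-parameter families: a function of at most three parameters and a time
has arbitrarily good approximations for which no parameter value sees both a non-positive and a
non-negative real, at whatever times. Such a coincidence is governed by at most `3 + 2` variables and
is subject to `3 + 3` equations, so it disappears after a small generic translation near each of the
two half-lines. -/
lemma exists_general_position {n : ℕ} (hn : n ≤ 3) {f : (Fin n → I) × I → ℍ[ℝ]}
    (hf : Continuous f) {c : ℝ} (hc : 0 < c) (hfc : ∀ p, c ≤ ‖f p‖) {η : ℝ} (hη : 0 < η)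
    (hηc : η ≤ c / 8) :
    ∃ g : (Fin n → I) × I → ℍ[ℝ], Continuous g ∧ (∀ p, ‖g p - f p‖ ≤ η) ∧
      ∀ k t₁ t₂, IsNeg (g (k, t₁)) → IsPos (g (k, t₂)) → False := by
  let r : (Fin n → ℝ) × ℝ → (Fin n → I) × I :=
    Prod.map clamp (Set.projIcc 0 1 zero_le_one)
  have hr : UniformContinuous r := uniformContinuous_clamp.prodMap
    (LipschitzWith.projIcc zero_le_one).uniformContinuous
  let e : (Fin n → I) × I → (Fin n → ℝ) × ℝ := fun p ↦ (fun i ↦ p.1 i, p.2)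
  have he : Continuous e := by fun_prop
  have hre : ∀ p, r (e p) = p := fun p ↦
    Prod.ext (clamp_coe p.1) (Set.projIcc_val zero_le_one _)
  obtain ⟨P, hP, hPd⟩ := exists_smooth_approx hr hre hf (show 0 < η / 2 by positivity)
  have hPc := hP.continuous
  -- real shifts of the values of `P` at two times, as a map from dimension `n + 4` to dimension `8`
  let S : (Fin n → ℝ) × ℝ × ℝ × ℝ × ℝ → ℍ[ℝ] × ℍ[ℝ] := fun z ↦
    (z.2.2.2.1 • (1 : ℍ[ℝ]) - P (z.1, z.2.1), z.2.2.2.2 • (1 : ℍ[ℝ]) - P (z.1, z.2.2.1))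
  have hS : ContDiff ℝ 1 S := by
    have h1 : ContDiff ℝ 1 fun z : (Fin n → ℝ) × ℝ × ℝ × ℝ × ℝ ↦ P (z.1, z.2.1) :=
      hP.comp (by fun_prop)
    have h2 : ContDiff ℝ 1 fun z : (Fin n → ℝ) × ℝ × ℝ × ℝ × ℝ ↦ P (z.1, z.2.2.1) :=
      hP.comp (by fun_prop)
    exact ContDiff.prodMk (ContDiff.sub (by fun_prop) h1) (ContDiff.sub (by fun_prop) h2)
  have hd : Dense (Set.range S)ᶜ := hS.dense_compl_range_of_finrank_lt_finrank (by
    simp only [Module.finrank_prod, Module.finrank_fin_fun, Quaternion.finrank_eq_four,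
      Module.finrank_self]
    omega)
  obtain ⟨⟨v, w⟩, hvw, hvwd⟩ := hd.exists_dist_lt 0 (show 0 < η / 2 by positivity)
  rw [dist_zero_left, Prod.norm_def, max_lt_iff] at hvwd
  obtain ⟨hv, hw⟩ := hvwd
  simp only at hv hw
  -- `ψ` translates by `v` where the real part is at most `-c / 2`, by `w` where it is at least `c / 2`
  let lam : ℝ → ℝ := fun x ↦ max 0 (min 1 (1 / 2 - x / c))
  have hlam : Continuous lam := by fun_prop
  have hlam0 : ∀ x, 0 ≤ lam x := fun x ↦ le_max_left _ _
  have hlam1 : ∀ x, lam x ≤ 1 := fun x ↦ max_le zero_le_one (min_le_left _ _)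
  have hre' := Quaternion.continuous_re
  let ψ : ℍ[ℝ] → ℍ[ℝ] := fun x ↦ x + (lam x.re • v + (1 - lam x.re) • w)
  have hψ : Continuous ψ := by fun_prop
  have hψd : ∀ x, ‖ψ x - x‖ ≤ η / 2 := by
    intro x
    have : ψ x - x = lam x.re • v + (1 - lam x.re) • w := by simp [ψ]
    rw [this]
    refine (norm_add_le _ _).trans ?_
    rw [norm_smul, norm_smul, Real.norm_eq_abs, Real.norm_eq_abs, abs_of_nonneg (hlam0 _),
      abs_of_nonneg (sub_nonneg.2 (hlam1 _))]
    nlinarith [hlam0 x.re, hlam1 x.re]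
  have hgd : ∀ p, ‖ψ (P (e p)) - f p‖ ≤ η := fun p ↦ by
    have h1 := hPd p
    have h2 := hψd (P (e p))
    have h3 := norm_add_le (ψ (P (e p)) - P (e p)) (P (e p) - f p)
    rw [sub_add_sub_cancel] at h3
    linarith
  have key : ∀ p, (ψ (P (e p))).im = 0 → 7 * c / 8 ≤ |(P (e p)).re| := by
    intro p hp
    have h1 := norm_im_le (ψ (P (e p)) - P (e p))
    rw [Quaternion.im_sub, hp, zero_sub, norm_neg] at h1
    have h2 := norm_le_re_add_im (P (e p))
    have h3 := hPd p
    have h4 := hfc p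
    have h5 := norm_sub_norm_le (f p) (P (e p))
    rw [norm_sub_rev] at h5
    have h6 := hψd (P (e p))
    linarith
  refine ⟨fun p ↦ ψ (P (e p)), by fun_prop, hgd, fun k t₁ t₂ h1 h2 ↦ ?_⟩
  have a1 : (P (e (k, t₁))).re ≤ -(c / 2) := by
    have b1 := key _ h1.1
    have b2 := abs_le.1 ((abs_re_le _).trans (hψd (P (e (k, t₁)))))
    have b3 := h1.2
    rw [Quaternion.re_sub] at b2
    by_contra hh
    rcases abs_cases (P (e (k, t₁))).re with ⟨hh1, hh2⟩ | ⟨hh1, hh2⟩ <;> rw [hh1] at b1 <;> linarith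
  have a2 : c / 2 ≤ (P (e (k, t₂))).re := by
    have b1 := key _ h2.1
    have b2 := abs_le.1 ((abs_re_le _).trans (hψd (P (e (k, t₂)))))
    have b3 := h2.2
    rw [Quaternion.re_sub] at b2
    by_contra hh
    rcases abs_cases (P (e (k, t₂))).re with ⟨hh1, hh2⟩ | ⟨hh1, hh2⟩ <;> rw [hh1] at b1 <;> linarith
  have l1 : lam (P (e (k, t₁))).re = 1 := by
    have : 1 ≤ 1 / 2 - (P (e (k, t₁))).re / c := by
      have : (P (e (k, t₁))).re / c ≤ -(1 / 2) := by
        rw [div_le_iff₀ hc]; linarith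
      linarith
    simp only [lam]
    rw [min_eq_left this, max_eq_right zero_le_one]
  have l2 : lam (P (e (k, t₂))).re = 0 := by
    have : 1 / 2 - (P (e (k, t₂))).re / c ≤ 0 := by
      have : 1 / 2 ≤ (P (e (k, t₂))).re / c := by
        rw [le_div_iff₀ hc]; linarith
      linarith
    simp only [lam]
    exact max_eq_left ((min_le_right _ _).trans this)
  have p1 : ψ (P (e (k, t₁))) = P (e (k, t₁)) + v := by simp [ψ, l1]
  have p2 : ψ (P (e (k, t₂))) = P (e (k, t₂)) + w := by simp [ψ, l2]
  have real_of : ∀ q : ℍ[ℝ], q.im = 0 → q.re • (1 : ℍ[ℝ]) = q := by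
    intro q hq
    conv_rhs => rw [← Quaternion.re_add_im q, hq, add_zero]
    rw [← Quaternion.coe_mul_eq_smul, mul_one]
  refine hvw ⟨(fun i ↦ k i, t₁, t₂, (ψ (P (e (k, t₁)))).re, (ψ (P (e (k, t₂)))).re), ?_⟩
  have r1 := (real_of _ h1.1).trans p1
  have r2 := (real_of _ h2.1).trans p2
  refine Prod.ext ?_ ?_
  · change (ψ (P (e (k, t₁)))).re • (1 : ℍ[ℝ]) - P (e (k, t₁)) = v
    rw [r1, add_sub_cancel_left]
  · change (ψ (P (e (k, t₂)))).re • (1 : ℍ[ℝ]) - P (e (k, t₂)) = w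
    rw [r2, add_sub_cancel_left]

/-- A family of paths from `1` to `-1` in the non-zero quaternions can be moved slightly, keeping
it fixed over a closed set `C` of parameters where the paths are arcs `arc x`, so that up to a
continuously varying time `τ` they avoid the half-line of non-positive reals and from then on the
half-line of non-negative reals. -/
lemma exists_separation {n : ℕ} (hn : n ≤ 3) {f : (Fin n → I) × I → ℍ[ℝ]}
    (hf : Continuous f) (hf0 : ∀ p, f p ≠ 0) (hfs : ∀ k, f (k, 0) = 1) (hfe : ∀ k, f (k, 1) = -1)
    {C : Set (Fin n → I)} (hC : IsClosed C)
    (hfC : ∀ k ∈ C, ∃ x : ℍ[ℝ], x.im ≠ 0 ∧ ∀ t, f (k, t) = arc x t) :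
    ∃ (f' : (Fin n → I) × I → ℍ[ℝ]) (τ : (Fin n → I) → I), Continuous f' ∧ Continuous τ ∧
      (∀ k, f' (k, 0) = 1) ∧ (∀ k, f' (k, 1) = -1) ∧ (∀ k ∈ C, ∀ t, f' (k, t) = f (k, t)) ∧
      (∀ p, ‖f' p - f p‖ < ‖f p‖) ∧ (∀ k ∈ C, (τ k : ℝ) = 1 / 2) ∧
      (∀ k t, t ≤ τ k → ¬ IsNeg (f' (k, t))) ∧ ∀ k t, τ k ≤ t → ¬ IsPos (f' (k, t)) := by
  obtain ⟨c, hc, hfc⟩ := isCompact_univ.exists_forall_le' (f := fun p ↦ ‖f p‖) (a := 0)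
    (by fun_prop) (fun p _ ↦ norm_pos_iff.2 (hf0 p))
  replace hfc : ∀ p, c ≤ ‖f p‖ := fun p ↦ hfc p trivial
  let A : Set ((Fin n → I) × I) := {p | p.2 = 0} ∪ {p | p.2 = 1} ∪ {p | p.1 ∈ C}
  have hA : IsClosed A := ((isClosed_eq (by fun_prop) (by fun_prop)).union
    (isClosed_eq (by fun_prop) (by fun_prop))).union (hC.preimage continuous_fst)
  have hA1 : ∀ k t, (k, t) ∈ A → IsNeg (f (k, t)) → t = 1 := by
    rintro k t ((h | h) | h) hneg
    · have h : t = 0 := h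
      rw [h, hfs] at hneg
      exact absurd hneg not_isNeg_one
    · exact h
    · obtain ⟨x, hx, hfx⟩ := hfC k h
      rw [hfx] at hneg
      exact eq_one_of_isNeg_arc hx hneg
  have hA2 : ∀ k t, (k, t) ∈ A → IsPos (f (k, t)) → t = 0 := by
    rintro k t ((h | h) | h) hpos
    · exact h
    · have h : t = 1 := h
      rw [h, hfe] at hpos
      exact absurd hpos not_isPos_neg_one
    · obtain ⟨x, hx, hfx⟩ := hfC k h
      rw [hfx] at hpos
      exact eq_zero_of_isPos_arc hx hpos
  let df : (Fin n → I) × I × I → ℝ := fun z ↦ defect (f (z.1, z.2.1)) (f (z.1, z.2.2))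
  have hdf : Continuous df := continuous_defect.comp
    (f := fun z : (Fin n → I) × I × I ↦ (f (z.1, z.2.1), f (z.1, z.2.2))) (by fun_prop)
  have hTA : IsClosed {z : (Fin n → I) × I × I | z.2.1 ≤ z.2.2 ∧
      ((z.1, z.2.1) ∈ A ∨ (z.1, z.2.2) ∈ A)} :=
    (isClosed_le (by fun_prop) (by fun_prop)).inter
      ((hA.preimage (f := fun z : (Fin n → I) × I × I ↦ (z.1, z.2.1)) (by fun_prop)).union
        (hA.preimage (f := fun z : (Fin n → I) × I × I ↦ (z.1, z.2.2)) (by fun_prop)))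
  -- on `A` no pair of times is bad, quantitatively by compactness; so the correction by `g` is needed
  -- only away from `A`
  obtain ⟨δ, hδ, hδT⟩ := hTA.isCompact.exists_forall_le' (f := df) (a := 0)
    hdf.continuousOn (by
      rintro ⟨k, t₁, t₂⟩ ⟨hle, hz⟩
      by_contra hcon
      obtain ⟨hneg, hpos⟩ := defect_eq_zero (not_lt.1 hcon)
      simp only at hle hz hneg hpos
      rcases hz with hz | hz
      · have h1 := hA1 k t₁ hz hneg
        have h2 : t₂ = 1 := le_antisymm t₂.2.2 (h1 ▸ hle)
        rw [h2, hfe] at hpos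
        exact not_isPos_neg_one hpos
      · have h1 := hA2 k t₂ hz hpos
        have h2 : t₁ = 0 := le_antisymm (h1 ▸ hle) t₁.2.1
        rw [h2, hfs] at hneg
        exact not_isNeg_one hneg)
  let η := min (c / 8) (δ / 8)
  have hη : 0 < η := lt_min (by positivity) (by positivity)
  have hηc : η ≤ c / 8 := min_le_left _ _
  have hηδ : η ≤ δ / 8 := min_le_right _ _
  obtain ⟨g, hg, hgf, hgbad⟩ := exists_general_position hn hf hc hfc hη hηc
  have hScl : IsCompact {z : (Fin n → I) × I × I | z.2.1 ≤ z.2.2 ∧ df z ≤ δ / 2} :=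
    ((isClosed_le (by fun_prop) (by fun_prop)).inter
      (isClosed_le hdf continuous_const)).isCompact
  -- the points occurring in an almost bad pair
  let D : Set ((Fin n → I) × I) :=
    (fun z : (Fin n → I) × I × I ↦ (z.1, z.2.1)) '' {z | z.2.1 ≤ z.2.2 ∧ df z ≤ δ / 2} ∪
    (fun z : (Fin n → I) × I × I ↦ (z.1, z.2.2)) '' {z | z.2.1 ≤ z.2.2 ∧ df z ≤ δ / 2}
  have hD : IsClosed D := ((hScl.image (by fun_prop)).union (hScl.image (by fun_prop))).isClosed
  have hAD : Disjoint A D := by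
    rw [Set.disjoint_left]
    rintro p hp (⟨z, hz, rfl⟩ | ⟨z, hz, rfl⟩)
    · have := hδT z ⟨hz.1, Or.inl hp⟩
      linarith [hz.2]
    · have := hδT z ⟨hz.1, Or.inr hp⟩
      linarith [hz.2]
  obtain ⟨φ, hφ0, hφ1, hφ⟩ := exists_continuous_zero_one_of_isClosed hA hD hAD
  let f' : (Fin n → I) × I → ℍ[ℝ] := fun p ↦ f p + φ p • (g p - f p)
  have hf' : Continuous f' := by fun_prop
  have hf'A : ∀ p ∈ A, f' p = f p := fun p hp ↦ by
    have : φ p = 0 := hφ0 hp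
    simp [f', this]
  have hf'D : ∀ p ∈ D, f' p = g p := fun p hp ↦ by
    have : φ p = 1 := hφ1 hp
    simp [f', this]
  have hf'd : ∀ p, ‖f' p - f p‖ ≤ η := fun p ↦ by
    have : f' p - f p = φ p • (g p - f p) := by simp [f']
    rw [this, norm_smul, Real.norm_eq_abs, abs_of_nonneg (hφ p).1]
    exact (mul_le_of_le_one_left (norm_nonneg _) (hφ p).2).trans (hgf p)
  have hbad : ∀ k t₁ t₂, t₁ ≤ t₂ → IsNeg (f' (k, t₁)) → IsPos (f' (k, t₂)) → False := by
    intro k t₁ t₂ hle h1 h2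
    have h3 : df (k, t₁, t₂) ≤ δ / 2 :=
      (defect_le h1 h2 (hf'd _) (hf'd _)).trans (by linarith)
    have d1 : (k, t₁) ∈ D := Or.inl ⟨(k, t₁, t₂), ⟨hle, h3⟩, rfl⟩
    have d2 : (k, t₂) ∈ D := Or.inr ⟨(k, t₁, t₂), ⟨hle, h3⟩, rfl⟩
    rw [hf'D _ d1] at h1
    rw [hf'D _ d2] at h2
    exact hgbad k t₁ t₂ h1 h2
  have hf's : ∀ k, f' (k, 0) = 1 := fun k ↦ by rw [hf'A _ (Or.inl (Or.inl rfl)), hfs]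
  have hf'e : ∀ k, f' (k, 1) = -1 := fun k ↦ by rw [hf'A _ (Or.inl (Or.inr rfl)), hfe]
  have hf'C : ∀ k ∈ C, ∀ t, f' (k, t) = f (k, t) := fun k hk t ↦ hf'A _ (Or.inr hk)
  -- the admissible separation times
  let T : (Fin n → I) → Set ℝ := fun k ↦ {s | 0 ≤ s ∧ s ≤ 1 ∧
    (∀ t : I, (t : ℝ) ≤ s → ¬ IsNeg (f' (k, t))) ∧ ∀ t : I, s ≤ (t : ℝ) → ¬ IsPos (f' (k, t))}
  have hTconv : ∀ k, Convex ℝ (T k) := by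
    intro k
    refine Set.OrdConnected.convex ⟨?_⟩
    rintro x ⟨x0, x1, x2, x3⟩ y ⟨y0, y1, y2, y3⟩ z ⟨hz1, hz2⟩
    exact ⟨x0.trans hz1, hz2.trans y1, fun t ht ↦ y2 t (ht.trans hz2),
      fun t ht ↦ x3 t (hz1.trans ht)⟩
  have hTopen : ∀ s : ℝ, 0 ≤ s → s ≤ 1 → IsOpen {k | s ∈ T k} := by
    intro s hs0 hs1
    have hsnd : Continuous fun p : (Fin n → I) × I ↦ (p.2 : ℝ) := by fun_prop
    have hcl : IsCompact {p : (Fin n → I) × I | ((p.2 : ℝ) ≤ s ∧ IsNeg (f' p)) ∨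
        (s ≤ (p.2 : ℝ) ∧ IsPos (f' p))} :=
      (((isClosed_le hsnd continuous_const).inter (isClosed_isNeg.preimage hf')).union
        ((isClosed_le continuous_const hsnd).inter (isClosed_isPos.preimage hf'))).isCompact
    have : {k | s ∈ T k} = (Prod.fst '' {p : (Fin n → I) × I | ((p.2 : ℝ) ≤ s ∧ IsNeg (f' p)) ∨
        (s ≤ (p.2 : ℝ) ∧ IsPos (f' p))})ᶜ := by
      ext k
      constructor
      · rintro ⟨-, -, h1, h2⟩ ⟨⟨k', t⟩, h, rfl⟩
        rcases h with ⟨ha, hb⟩ | ⟨ha, hb⟩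
        · exact h1 t ha hb
        · exact h2 t ha hb
      · intro h
        refine ⟨hs0, hs1, fun t ht hneg ↦ h ⟨(k, t), Or.inl ⟨ht, hneg⟩, rfl⟩,
          fun t ht hpos ↦ h ⟨(k, t), Or.inr ⟨ht, hpos⟩, rfl⟩⟩
    rw [this]
    exact (hcl.image continuous_fst).isClosed.isOpen_compl
  have hTloc : ∀ k, ∃ s : ℝ, ∀ᶠ k' in 𝓝 k, s ∈ T k' := by
    intro k
    have hcp : IsCompact {t : I | IsPos (f' (k, t))} :=
      (isClosed_isPos.preimage (hf'.comp (by fun_prop : Continuous fun t : I ↦ (k, t)))).isCompact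
    have hcn : IsCompact {t : I | IsNeg (f' (k, t))} :=
      (isClosed_isNeg.preimage (hf'.comp (by fun_prop : Continuous fun t : I ↦ (k, t)))).isCompact
    obtain ⟨a, ha, hamax⟩ := hcp.exists_isGreatest ⟨0, by
      change IsPos _; rw [hf's]; exact ⟨rfl, by simp⟩⟩
    obtain ⟨b, hb, hbmin⟩ := hcn.exists_isLeast ⟨1, by
      change IsNeg _; rw [hf'e]; exact ⟨by simp, by simp⟩⟩
    have hab : (a : ℝ) < b := by
      by_contra h
      exact hbad k b a (not_lt.1 h) hb ha
    have ha0 := a.2.1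
    have hb1 := b.2.2
    refine ⟨((a : ℝ) + b) / 2, (hTopen _ (by linarith) (by linarith)).mem_nhds
      ⟨by linarith, by linarith, fun t ht hneg ↦ ?_, fun t ht hpos ↦ ?_⟩⟩
    · have : (b : ℝ) ≤ t := hbmin hneg
      linarith
    · have : (t : ℝ) ≤ a := hamax hpos
      linarith
  -- a continuous selection of times in `T k`, then adjusted to be `1 / 2` on `C`
  obtain ⟨τ₀, hτ₀⟩ := exists_continuous_forall_mem_convex_of_local_const hTconv hTloc
  have hO := hTopen (1 / 2) (by norm_num) (by norm_num)
  have hCO : ∀ k ∈ C, (1 / 2 : ℝ) ∈ T k := by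
    intro k hk
    obtain ⟨x, hx, hfx⟩ := hfC k hk
    refine ⟨by norm_num, by norm_num, fun t ht hneg ↦ ?_, fun t ht hpos ↦ ?_⟩
    · rw [hf'C k hk, hfx] at hneg
      rw [eq_one_of_isNeg_arc hx hneg] at ht
      norm_num at ht
    · rw [hf'C k hk, hfx] at hpos
      rw [eq_zero_of_isPos_arc hx hpos] at ht
      norm_num at ht
  obtain ⟨θ, hθ0, hθ1, hθ⟩ := exists_continuous_zero_one_of_isClosed hO.isClosed_compl hC
    (Set.disjoint_left.2 fun k hk hkC ↦ hk (hCO k hkC))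
  let τ₁ : (Fin n → I) → ℝ := fun k ↦ (1 - θ k) * τ₀ k + θ k * (1 / 2)
  have hτ₁ : ∀ k, τ₁ k ∈ T k := by
    intro k
    by_cases hk : (1 / 2 : ℝ) ∈ T k
    · exact hTconv k (hτ₀ k) hk (by linarith [(hθ k).2]) (hθ k).1 (by ring)
    · have : θ k = 0 := hθ0 hk
      simpa [τ₁, this] using hτ₀ k
  refine ⟨f', fun k ↦ ⟨τ₁ k, (hτ₁ k).1, (hτ₁ k).2.1⟩, hf', by fun_prop, hf's, hf'e, hf'C,
    fun p ↦ ?_, fun k hk ↦ ?_, fun k t ht ↦ (hτ₁ k).2.2.1 t ht, fun k t ht ↦ (hτ₁ k).2.2.2 t ht⟩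
  · have := hf'd p
    have := hfc p
    linarith
  · have : θ k = 1 := hθ1 hk
    simp [τ₁, this]

/-! ### The suspension-type map from the second to the third homotopy group -/

lemma re_im_of_sq {a : ℍ[ℝ]} (h : a * a = -1) : a.re = 0 ∧ ‖a.im‖ = 1 := by
  have h1 := norm_eq_one_of_sq h
  have h2 := congrArg (·.re) h
  have h3 := norm_sq_eq a
  rw [h1] at h3
  have h4 : ‖a.im‖ ^ 2 = a.imI ^ 2 + a.imJ ^ 2 + a.imK ^ 2 := by
    rw [sq, ← Quaternion.normSq_eq_norm_mul_self, Quaternion.normSq_def']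
    simp
  simp [Quaternion.re_mul] at h2
  have h5 : a.re = 0 := by nlinarith
  refine ⟨h5, ?_⟩
  rw [h5] at h3
  nlinarith [norm_nonneg a.im]

lemma im_ne_zero_of_sq {a : ℍ[ℝ]} (h : a * a = -1) : a.im ≠ 0 := by
  intro h0
  have := (re_im_of_sq h).2
  simp [h0] at this

lemma im_eq_self_of_sq {a : ℍ[ℝ]} (h : a * a = -1) : a.im = a := by
  conv_rhs => rw [← Quaternion.re_add_im a, (re_im_of_sq h).1]
  simp

/-- The retraction of the non-real quaternions onto the square roots of `-1`. -/
noncomputable def ret (x : ℍ[ℝ]) : ℍ[ℝ] := ‖x.im‖⁻¹ • x.im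

lemma ret_of_sq {a : ℍ[ℝ]} (h : a * a = -1) : ret a = a := by
  rw [ret, (re_im_of_sq h).2, inv_one, one_smul, im_eq_self_of_sq h]

lemma ret_sq {x : ℍ[ℝ]} (h : x.im ≠ 0) : ret x * ret x = -1 := by
  have h1 : x.im * x.im = -((‖x.im‖ ^ 2 : ℝ) : ℍ[ℝ]) := by
    have h2 := Quaternion.self_mul_star x.im
    have h3 : star x.im = -x.im := by ext <;> simp
    rw [h3, mul_neg, Quaternion.normSq_eq_norm_mul_self] at h2
    rw [sq ‖x.im‖, ← h2, neg_neg]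
  have h4 : ‖x.im‖ ≠ 0 := norm_ne_zero_iff.2 h
  rw [ret, smul_mul_smul_comm, h1, smul_neg, ← Quaternion.coe_smul, smul_eq_mul]
  congr 1
  rw [show ‖x.im‖⁻¹ * ‖x.im‖⁻¹ * ‖x.im‖ ^ 2 = 1 by field_simp]
  rfl

lemma ret_im (x : ℍ[ℝ]) : (ret x).im = ‖x.im‖⁻¹ • x.im := by
  rw [ret]; ext <;> simp

lemma continuous_ret {Z : Type*} [TopologicalSpace Z] {f : Z → ℍ[ℝ]} (hf : Continuous f)
    (h : ∀ z, (f z).im ≠ 0) : Continuous fun z ↦ ret (f z) := by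
  have h1 : Continuous fun z ↦ (f z).im := Quaternion.continuous_im.comp hf
  exact (h1.norm.inv₀ fun z ↦ norm_ne_zero_iff.2 (h z)).smul h1

lemma qi_im : qi.im ≠ 0 := im_ne_zero_of_sq qi_mul_qi

lemma commute_smul (r : ℝ) {q : ℍ[ℝ]} (h : Commute q qi) : Commute (r • q) qi :=
  Commute.smul_left h r

lemma commute_arc {x : ℍ[ℝ]} (h : Commute x qi) (t : I) : Commute (arc x t) qi :=
  (commute_smul _ (Commute.one_left _)).add_left (commute_smul _ h)

lemma continuous_arc' {Z : Type*} [TopologicalSpace Z] {f : Z → ℍ[ℝ]} {t : Z → I}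
    (hf : Continuous f) (ht : Continuous t) : Continuous fun z ↦ arc (f z) (t z) :=
  continuous_arc.comp (hf.prodMk ht)

lemma continuous_tail {n : ℕ} :
    Continuous fun y : Fin (n + 1) → I ↦ (Fin.tail y : Fin n → I) := by
  unfold Fin.tail; fun_prop

lemma continuous_cons {n : ℕ} :
    Continuous fun p : I × (Fin n → I) ↦ (Fin.cons p.1 p.2 : Fin (n + 1) → I) := by
  refine continuous_pi fun i ↦ ?_
  refine Fin.cases ?_ (fun j ↦ ?_) i
  · simpa using continuous_fst
  · simp only [Fin.cons_succ]; fun_prop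

lemma boundary_succ {n : ℕ} {y : Fin (n + 1) → I} (hy : y ∈ Cube.boundary (Fin (n + 1))) :
    y 0 = 0 ∨ y 0 = 1 ∨ (Fin.tail y : Fin n → I) ∈ Cube.boundary (Fin n) := by
  obtain ⟨i, hi⟩ := hy
  induction i using Fin.cases with
  | zero => exact hi.elim Or.inl fun h ↦ Or.inr (Or.inl h)
  | succ j => exact Or.inr (Or.inr ⟨j, hi⟩)

lemma cons_zero_mem {n : ℕ} (k : Fin n → I) :
    (Fin.cons 0 k : Fin (n + 1) → I) ∈ Cube.boundary (Fin (n + 1)) := ⟨0, Or.inl rfl⟩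

lemma cons_one_mem {n : ℕ} (k : Fin n → I) :
    (Fin.cons 1 k : Fin (n + 1) → I) ∈ Cube.boundary (Fin (n + 1)) := ⟨0, Or.inr rfl⟩

lemma cons_mem {n : ℕ} (t : I) {k : Fin n → I} (hk : k ∈ Cube.boundary (Fin n)) :
    (Fin.cons t k : Fin (n + 1) → I) ∈ Cube.boundary (Fin (n + 1)) := by
  obtain ⟨i, hi⟩ := hk
  exact ⟨i.succ, by simpa using hi⟩

/-- The three-dimensional loop obtained by conjugating `i` with the arcs through the points of a
two-dimensional loop; this is the composite of the suspension of the loop with the Hopf map. The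
arc parameter is the coordinate `0`. -/
noncomputable def susp (g : Ω^ (Fin 2) B bi) : Ω^ (Fin 3) B bi :=
  conjLoop (fun y ↦ arc (g (Fin.tail y)).1 (y 0))
    (continuous_arc' ((loop_continuous g).comp continuous_tail) (continuous_apply 0))
    (fun _ ↦ arc_ne_zero (im_ne_zero_of_sq (g _).2) _) (fun y hy ↦ by
      rcases boundary_succ hy with h | h | h
      · simp [h, arc_zero]
      · simp [h, arc_one]
      · rw [loop_boundary g h]
        exact commute_arc rfl _)

lemma susp_lift (g : Ω^ (Fin 2) B bi) (k : Fin 2 → I) (t : I) :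
    arc (g k).1 t * qi = (susp g (Fin.cons t k)).1 * arc (g k).1 t :=
  conjLoop_lift (fun y ↦ arc (g (Fin.tail y)).1 (y 0)) _ _ _ (Fin.cons t k)

lemma susp_val (g : Ω^ (Fin 2) B bi) (y : Fin 3 → I) :
    (susp g y).1 = arc (g (Fin.tail y)).1 (y 0) * qi * (arc (g (Fin.tail y)).1 (y 0))⁻¹ := rfl

lemma susp_trans (f g : Ω^ (Fin 2) B bi) :
    susp (GenLoop.transAt 0 f g) = GenLoop.transAt 1 (susp f) (susp g) := by
  refine GenLoop.ext _ _ fun y ↦ Subtype.ext ?_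
  have h : ∀ a : I, (Fin.tail (Function.update y 1 a) : Fin 2 → I) =
      Function.update (Fin.tail y) 0 a := fun a ↦ by
    ext i; fin_cases i <;> simp [Fin.tail]
  have h' : ∀ a : I, Function.update y 1 a 0 = y 0 := fun a ↦ by simp
  rw [transAt_val, susp_val, transAt_val, susp_val, susp_val, h, h, h', h']
  have : (Fin.tail y : Fin 2 → I) 0 = y 1 := rfl
  rw [this]
  split_ifs <;> rfl

lemma susp_homotopic {f g : Ω^ (Fin 2) B bi} (h : GenLoop.Homotopic f g) :
    GenLoop.Homotopic (susp f) (susp g) := by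
  obtain ⟨H, hH, hsq, h0, h1, hb⟩ := exists_of_homotopic h
  have hc : Continuous fun p : I × (Fin 3 → I) ↦ (p.1, (Fin.tail p.2 : Fin 2 → I)) :=
    continuous_fst.prodMk (continuous_tail.comp continuous_snd)
  refine homotopic_of_lift (fun p ↦ arc (H (p.1, Fin.tail p.2)) (p.2 0))
    (continuous_arc' (hH.comp hc) (by fun_prop))
    (fun p ↦ arc_ne_zero (im_ne_zero_of_sq (hsq _)) _) (fun y ↦ ?_) (fun y ↦ ?_) (fun s y hy ↦ ?_)
  · simp only [h0]
    exact conjLoop_lift (fun y ↦ arc (f (Fin.tail y)).1 (y 0)) _ _ _ y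
  · simp only [h1]
    exact conjLoop_lift (fun y ↦ arc (g (Fin.tail y)).1 (y 0)) _ _ _ y
  · simp only
    rcases boundary_succ hy with h | h | h
    · simp [h, arc_zero]
    · simp [h, arc_one]
    · rw [hb _ _ h]
      exact commute_arc rfl _

/-- A deformation of a lift of a three-dimensional loop, through non-zero quaternions commuting with `i`
on the boundary, deforms the loop. -/
lemma lift_step {L : Ω^ (Fin 3) B bi} (F : I × (Fin 2 → I) × I → ℍ[ℝ]) (hF : Continuous F)
    (hF0 : ∀ p, F p ≠ 0)
    (hL : ∀ k t, F (0, k, t) * qi = (L (Fin.cons t k)).1 * F (0, k, t))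
    (hs : ∀ s k, Commute (F (s, k, 0)) qi) (he : ∀ s k, Commute (F (s, k, 1)) qi)
    (hb : ∀ s, ∀ k ∈ Cube.boundary (Fin 2), ∀ t, Commute (F (s, k, t)) qi) :
    ∃ L' : Ω^ (Fin 3) B bi, GenLoop.Homotopic L L' ∧
      ∀ k t, F (1, k, t) * qi = (L' (Fin.cons t k)).1 * F (1, k, t) := by
  have hc : Continuous fun p : I × (Fin 3 → I) ↦ (p.1, (Fin.tail p.2 : Fin 2 → I), p.2 0) :=
    continuous_fst.prodMk ((continuous_tail.comp continuous_snd).prodMk (by fun_prop))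
  have hcomm : ∀ s, ∀ y ∈ Cube.boundary (Fin 3), Commute (F (s, Fin.tail y, y 0)) qi := by
    intro s y hy
    rcases boundary_succ hy with h | h | h
    · rw [h]; exact hs _ _
    · rw [h]; exact he _ _
    · exact hb _ _ h _
  have hc1 : Continuous fun y : Fin 3 → I ↦ F (1, Fin.tail y, y 0) :=
    (hF.comp hc).comp (continuous_const.prodMk continuous_id)
  refine ⟨conjLoop (fun y ↦ F (1, Fin.tail y, y 0)) hc1 (fun _ ↦ hF0 _) (hcomm 1),
    homotopic_of_lift (fun p ↦ F (p.1, Fin.tail p.2, p.2 0)) (hF.comp hc) (fun _ ↦ hF0 _)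
      (fun y ↦ ?_) (fun y ↦ conjLoop_lift _ hc1 _ _ y) hcomm,
    fun k t ↦ conjLoop_lift _ hc1 (fun _ ↦ hF0 _) (hcomm 1) (Fin.cons t k)⟩
  have := hL (Fin.tail y) (y 0)
  rwa [Fin.cons_self_tail] at this

lemma eq_of_lift {L L' : Ω^ (Fin 3) B bi} (f : (Fin 2 → I) → I → ℍ[ℝ]) (hf : ∀ k t, f k t ≠ 0)
    (h : ∀ k t, f k t * qi = (L (Fin.cons t k)).1 * f k t)
    (h' : ∀ k t, f k t * qi = (L' (Fin.cons t k)).1 * f k t) : L = L' := by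
  refine GenLoop.ext _ _ fun y ↦ Subtype.ext ?_
  have h1 := h (Fin.tail y) (y 0)
  have h2 := h' (Fin.tail y) (y 0)
  rw [Fin.cons_self_tail] at h1 h2
  exact mul_right_cancel₀ (hf _ _) (h1.symm.trans h2)

/-! ### Pulling paths tight to arcs -/

lemma im_ne_zero_of_sep {x : ℍ[ℝ]} (h1 : ¬ IsNeg x) (h2 : ¬ IsPos x) : x.im ≠ 0 := fun h ↦
  (le_total x.re 0).elim (fun h' ↦ h1 ⟨h, h'⟩) (fun h' ↦ h2 ⟨h, h'⟩)

lemma ne_zero_of_not_isNeg {q : ℍ[ℝ]} (h : ¬ IsNeg q) {a : ℝ} (ha0 : 0 ≤ a) (ha1 : a ≤ 1) :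
    1 + a • (q - 1) ≠ 0 := by
  intro h0
  have h1 := congrArg Quaternion.im h0
  have h2 := congrArg (·.re) h0
  simp at h1 h2
  rcases h1 with h1 | h1
  · rw [h1] at h2; norm_num at h2
  · refine h ⟨h1, ?_⟩
    by_contra hq
    push Not at hq
    nlinarith [mul_nonneg ha0 hq.le, mul_nonneg ha0 (sub_nonneg.2 ha1)]

lemma ne_zero_of_not_isPos {q : ℍ[ℝ]} (h : ¬ IsPos q) {a : ℝ} (ha0 : 0 ≤ a) (ha1 : a ≤ 1) :
    -1 + a • (q + 1) ≠ 0 := by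
  intro h0
  refine ne_zero_of_not_isNeg (q := -q) (fun hh ↦ h ⟨?_, ?_⟩) ha0 ha1 ?_
  · have := hh.1
    rwa [Quaternion.im_neg, neg_eq_zero] at this
  · have := hh.2
    rw [Quaternion.re_neg] at this
    linarith
  · rw [← neg_eq_zero, ← h0, ← neg_add', smul_neg]
    abel

/-- Convex combination of two points of the unit interval. -/
def mix (a x y : I) : I :=
  ⟨(1 - a) * x + a * y, by
    have := a.2.1; have := a.2.2; have := x.2.1; have := x.2.2; have := y.2.1; have := y.2.2
    constructor
    · nlinarith
    · nlinarith⟩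

lemma mix_val (a x y : I) : (mix a x y : ℝ) = (1 - a) * x + a * y := rfl

lemma continuous_mix {Z : Type*} [TopologicalSpace Z] {a x y : Z → I} (ha : Continuous a)
    (hx : Continuous x) (hy : Continuous y) : Continuous fun z ↦ mix (a z) (x z) (y z) := by
  unfold mix; fun_prop

@[simp] lemma mix_zero (x y : I) : mix 0 x y = x := Subtype.ext (by simp [mix])

@[simp] lemma mix_one (x y : I) : mix 1 x y = y := Subtype.ext (by simp [mix])

@[simp] lemma mix_self (a x : I) : mix a x x = x := Subtype.ext (by simp only [mix]; ring)

/-- `min (2 t) 1`. -/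
noncomputable def up (t : I) : I :=
  ⟨min (2 * t) 1, le_min (by have := t.2.1; positivity) zero_le_one, min_le_right _ _⟩

/-- `max (2 t - 1) 0`. -/
noncomputable def late (t : I) : I :=
  ⟨max (2 * t - 1) 0, le_max_right _ _, max_le (by have := t.2.2; linarith) zero_le_one⟩

lemma continuous_up : Continuous up := by unfold up; fun_prop

lemma continuous_late : Continuous late := by unfold late; fun_prop

lemma up_zero : up 0 = 0 := Subtype.ext (by simp [up])

lemma up_one : up 1 = 1 := Subtype.ext (by simp [up])

lemma late_zero : late 0 = 0 := Subtype.ext (by simp [late])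

lemma late_one : late 1 = 1 := Subtype.ext (by simp [late]; norm_num)

lemma up_of_ge {t : I} (h : (1 / 2 : ℝ) ≤ t) : up t = 1 :=
  Subtype.ext (min_eq_right (by linarith))

lemma late_of_le {t : I} (h : (t : ℝ) ≤ 1 / 2) : late t = 0 :=
  Subtype.ext (max_eq_right (by linarith))

/-- Either `up t` has reached `1` or `late t` has not left `0`. -/
lemma up_or_late (t : I) : up t = 1 ∨ late t = 0 :=
  (le_total (t : ℝ) (1 / 2)).elim (fun h ↦ Or.inr (late_of_le h)) (fun h ↦ Or.inl (up_of_ge h))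

lemma mix_zero_one (a : I) : mix a 0 1 = a := Subtype.ext (by simp [mix])

lemma mix_symm (a x y : I) : mix (unitInterval.symm a) x y = mix a y x :=
  Subtype.ext (by simp only [mix_val, unitInterval.coe_symm_eq]; ring)

/-- A piece of a path `c` between the times `τ₀` (which will be an end point) and `τ`, with curve
parameter `r`. The deformation, with parameter `s`, contracts the curve towards `c τ₀` in its first
half and the parameter interval towards `τ` in its second half; it starts at the curve `c` and ends
at the segment from `c τ₀` to `c τ`. -/
noncomputable def tight (c : I → ℍ[ℝ]) (τ₀ τ s r : I) : ℍ[ℝ] :=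
  c τ₀ + (mix r (unitInterval.symm (up s)) 1 : ℝ) •
    (c (mix (mix r (late s) 1) τ₀ τ) - c τ₀)

lemma tight_start (c : I → ℍ[ℝ]) (τ₀ τ r : I) : tight c τ₀ τ 0 r = c (mix r τ₀ τ) := by
  simp [tight, up_zero, late_zero, mix_zero_one]

lemma tight_end (c : I → ℍ[ℝ]) (τ₀ τ r : I) :
    tight c τ₀ τ 1 r = c τ₀ + (r : ℝ) • (c τ - c τ₀) := by
  simp [tight, up_one, late_one, mix_zero_one]

lemma tight_zero (c : I → ℍ[ℝ]) (τ₀ τ s : I) : tight c τ₀ τ s 0 = c τ₀ := by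
  rcases up_or_late s with h | h <;> simp [tight, h]

lemma tight_one (c : I → ℍ[ℝ]) (τ₀ τ s : I) : tight c τ₀ τ s 1 = c τ := by
  simp [tight]

lemma commute_tight {c : I → ℍ[ℝ]} (h : ∀ t, Commute (c t) qi) (τ₀ τ s r : I) :
    Commute (tight c τ₀ τ s r) qi :=
  (h _).add_left (commute_smul _ ((h _).sub_left (h _)))

lemma tight_left_ne_zero {c : I → ℍ[ℝ]} (h0 : c 0 = 1) {τ : I} (h : ∀ t ≤ τ, ¬ IsNeg (c t))
    (s r : I) : tight c 0 τ s r ≠ 0 := by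
  rw [tight, h0]
  refine ne_zero_of_not_isNeg (h _ ?_) (mix _ _ _).2.1 (mix _ _ _).2.2
  rw [← Subtype.coe_le_coe, mix_val]
  simpa using mul_le_of_le_one_left τ.2.1 (mix r (late s) 1).2.2

lemma tight_right_ne_zero {c : I → ℍ[ℝ]} (h1 : c 1 = -1) {τ : I} (h : ∀ t, τ ≤ t → ¬ IsPos (c t))
    (s r : I) : tight c 1 τ s r ≠ 0 := by
  rw [tight, h1, sub_neg_eq_add]
  refine ne_zero_of_not_isPos (h _ ?_) (mix _ _ _).2.1 (mix _ _ _).2.2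
  rw [← Subtype.coe_le_coe, mix_val]
  have := (mix r (late s) 1).2.2
  have := τ.2.2
  simp only [Set.Icc.coe_one]
  nlinarith

lemma ret_homotopy_im {x : ℍ[ℝ]} (hx : x.im ≠ 0) (s : I) :
    ((1 - s : ℝ) • x + (s : ℝ) • ret x).im ≠ 0 := by
  have h1 : 0 < ‖x.im‖ := norm_pos_iff.2 hx
  rw [Quaternion.im_add, Quaternion.im_smul, Quaternion.im_smul, ret_im, smul_smul, ← add_smul]
  refine smul_ne_zero (ne_of_gt ?_) hx
  have h2 := inv_pos.2 h1
  rcases eq_or_lt_of_le s.2.1 with h | h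
  · rw [← h]; simp
  · have := s.2.2
    have := mul_pos h h2
    linarith

/-- A loop lifting to separated paths is, up to homotopy, in the image of `susp`: the part of a path
before the separating time is pulled tight to a segment starting at `1`, the part after it to a
segment ending at `-1`, and neither meets `0` on the way. -/
lemma exists_susp_of_separated {f : (Fin 2 → I) × I → ℍ[ℝ]} {τ : (Fin 2 → I) → I}
    (hf : Continuous f) (hτ : Continuous τ) (hfs : ∀ k, f (k, 0) = 1) (hfe : ∀ k, f (k, 1) = -1)
    (hfb : ∀ k ∈ Cube.boundary (Fin 2), ∀ t, f (k, t) = arc qi t)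
    (hτb : ∀ k ∈ Cube.boundary (Fin 2), (τ k : ℝ) = 1 / 2)
    (hneg : ∀ k t, t ≤ τ k → ¬ IsNeg (f (k, t))) (hpos : ∀ k t, τ k ≤ t → ¬ IsPos (f (k, t)))
    {L : Ω^ (Fin 3) B bi} (hL : ∀ k t, f (k, t) * qi = (L (Fin.cons t k)).1 * f (k, t)) :
    ∃ g, GenLoop.Homotopic L (susp g) := by
  have hf0 : ∀ p, f p ≠ 0 := by
    rintro ⟨k, t⟩ h
    rcases le_total t (τ k) with h' | h'
    · exact hneg k t h' (by rw [h]; exact ⟨rfl, le_rfl⟩)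
    · exact hpos k t h' (by rw [h]; exact ⟨rfl, le_rfl⟩)
  have hfc : ∀ k ∈ Cube.boundary (Fin 2), ∀ t, Commute (f (k, t)) qi := fun k hk t ↦ by
    rw [hfb k hk]; exact commute_arc rfl _
  have hu := continuous_up
  have hl := continuous_late
  let ρ : (Fin 2 → I) → I → I := fun k t ↦ mix (late t) (mix (up t) 0 (τ k)) 1
  have hρ : Continuous fun p : (Fin 2 → I) × I ↦ ρ p.1 p.2 :=
    continuous_mix (by fun_prop) (continuous_mix (by fun_prop) (by fun_prop) (by fun_prop))
      (by fun_prop)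
  have hρ0 : ∀ k, ρ k 0 = 0 := fun k ↦ by simp [ρ, late_zero, up_zero]
  have hρ1 : ∀ k, ρ k 1 = 1 := fun k ↦ by simp [ρ, late_one]
  -- reparametrize the paths so that the separating time becomes `1 / 2`
  obtain ⟨L₁, hL₁, hL₁f⟩ := lift_step (L := L)
    (fun p : I × (Fin 2 → I) × I ↦ f (p.2.1, mix p.1 p.2.2 (ρ p.2.1 p.2.2)))
    (hf.comp ((by fun_prop : Continuous fun p : I × (Fin 2 → I) × I ↦ p.2.1).prodMk
      (continuous_mix (by fun_prop) (by fun_prop) (hρ.comp continuous_snd))))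
    (fun p ↦ hf0 _) (fun k t ↦ by simpa using hL k t)
    (fun s k ↦ by simp [hρ0, hfs]) (fun s k ↦ by simp [hρ1, hfe])
    (fun s k hk t ↦ hfc _ hk _)
  simp only [mix_one] at hL₁f
  -- pull both halves of the paths tight
  let F : I × (Fin 2 → I) × I → ℍ[ℝ] := fun p ↦
    tight (fun t ↦ f (p.2.1, t)) 0 (τ p.2.1) p.1 (up p.2.2) +
    tight (fun t ↦ f (p.2.1, t)) 1 (τ p.2.1) p.1 (unitInterval.symm (late p.2.2)) -
    f (p.2.1, τ p.2.1)
  have hF_late : ∀ s k t, late t = 0 → F (s, k, t) =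
      tight (fun t ↦ f (k, t)) 0 (τ k) s (up t) := fun s k t h ↦ by
    simp [F, h, tight_one]
  have hF_up : ∀ s k t, up t = 1 → F (s, k, t) =
      tight (fun t ↦ f (k, t)) 1 (τ k) s (unitInterval.symm (late t)) := fun s k t h ↦ by
    simp [F, h, tight_one]
  have htc : ∀ (τ₀ : I) (r : I → I), Continuous r → Continuous fun p : I × (Fin 2 → I) × I ↦
      tight (fun t ↦ f (p.2.1, t)) τ₀ (τ p.2.1) p.1 (r p.2.2) := by
    intro τ₀ r hr
    unfold tight
    have m1 : Continuous fun p : I × (Fin 2 → I) × I ↦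
        mix (r p.2.2) (unitInterval.symm (up p.1)) 1 :=
      continuous_mix (by fun_prop) (by fun_prop) (by fun_prop)
    have m2 : Continuous fun p : I × (Fin 2 → I) × I ↦
        mix (mix (r p.2.2) (late p.1) 1) τ₀ (τ p.2.1) :=
      continuous_mix (continuous_mix (by fun_prop) (by fun_prop) (by fun_prop))
        (by fun_prop) (by fun_prop)
    fun_prop
  have hF : Continuous F := ((htc 0 up hu).add (htc 1 _ (unitInterval.continuous_symm.comp hl))).sub
    (by fun_prop)
  have hF0 : ∀ p, F p ≠ 0 := by
    rintro ⟨s, k, t⟩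
    rcases up_or_late t with h | h
    · rw [hF_up _ _ _ h]
      exact tight_right_ne_zero (hfe k) (hpos k) _ _
    · rw [hF_late _ _ _ h]
      exact tight_left_ne_zero (hfs k) (hneg k) _ _
  have hFs : ∀ k t, F (0, k, t) = f (k, ρ k t) := fun k t ↦ by
    rcases up_or_late t with h | h
    · rw [hF_up _ _ _ h, tight_start, mix_symm]
      simp [ρ, h]
    · rw [hF_late _ _ _ h, tight_start]
      simp [ρ, h]
  have hFe : ∀ k t, F (1, k, t) = arc (f (k, τ k)) t := fun k t ↦ by
    rcases le_total (t : ℝ) (1 / 2) with h | h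
    · have h1 : ((up t : I) : ℝ) = 2 * t := min_eq_left (by linarith)
      rw [hF_late _ _ _ (late_of_le h), tight_end, hfs, h1, arc,
        abs_of_nonpos (by linarith), smul_sub]
      module
    · have h1 : ((late t : I) : ℝ) = 2 * t - 1 := max_eq_left (by linarith)
      rw [hF_up _ _ _ (up_of_ge h), tight_end, hfe, unitInterval.coe_symm_eq, h1, arc,
        abs_of_nonneg (by linarith)]
      module
  obtain ⟨L₂, hL₂, hL₂f⟩ := lift_step (L := L₁) F hF hF0 (fun k t ↦ by rw [hFs]; exact hL₁f k t)
    (fun s k ↦ by rw [hF_late _ _ _ late_zero, up_zero, tight_zero, hfs]; exact Commute.one_left _)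
    (fun s k ↦ by
      rw [hF_up _ _ _ up_one, late_one, unitInterval.symm_one, tight_zero, hfe]
      exact (Commute.one_left _).neg_left)
    (fun s k hk t ↦ ((commute_tight (hfc k hk) _ _ _ _).add_left
      (commute_tight (hfc k hk) _ _ _ _)).sub_left (hfc k hk _))
  simp only [hFe] at hL₂f
  -- move the middle points of the arcs to square roots of `-1`
  have hx : ∀ k, (f (k, τ k)).im ≠ 0 := fun k ↦
    im_ne_zero_of_sep (hneg k _ le_rfl) (hpos k _ le_rfl)
  have hxc : Continuous fun k ↦ f (k, τ k) := by fun_prop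
  have hrc := continuous_ret hxc hx
  have hxb : ∀ k ∈ Cube.boundary (Fin 2), f (k, τ k) = qi := fun k hk ↦ by
    rw [hfb k hk, arc_half (hτb k hk)]
  obtain ⟨L₃, hL₃, hL₃f⟩ := lift_step (L := L₂)
    (fun p ↦ arc ((1 - p.1 : ℝ) • f (p.2.1, τ p.2.1) + (p.1 : ℝ) • ret (f (p.2.1, τ p.2.1))) p.2.2)
    (continuous_arc' (((by fun_prop : Continuous fun p : I × (Fin 2 → I) × I ↦
      (1 - p.1 : ℝ)).smul (by fun_prop)).add
      ((by fun_prop : Continuous fun p : I × (Fin 2 → I) × I ↦ (p.1 : ℝ)).smul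
        (hrc.comp (by fun_prop : Continuous fun p : I × (Fin 2 → I) × I ↦ p.2.1)))) (by fun_prop))
    (fun p ↦ arc_ne_zero (ret_homotopy_im (hx _) _) _)
    (fun k t ↦ by simpa using hL₂f k t)
    (fun s k ↦ by rw [arc_zero]; exact Commute.one_left _)
    (fun s k ↦ by rw [arc_one]; exact (Commute.one_left _).neg_left)
    (fun s k hk t ↦ by
      refine commute_arc ?_ _
      simp only [hxb k hk, ret_of_sq qi_mul_qi]
      exact (commute_smul _ rfl).add_left (commute_smul _ rfl))
  let g : Ω^ (Fin 2) B bi := mkLoop (fun k ↦ ret (f (k, τ k))) hrc (fun k ↦ ret_sq (hx k))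
    (fun k hk ↦ by rw [hxb k hk, ret_of_sq qi_mul_qi])
  refine ⟨g, hL₁.trans (hL₂.trans (hL₃.trans ?_))⟩
  have : L₃ = susp g := eq_of_lift (fun k t ↦ arc (ret (f (k, τ k))) t)
    (fun k t ↦ arc_ne_zero (im_ne_zero_of_sq (ret_sq (hx k))) _)
    (fun k t ↦ by simpa using hL₃f k t) (fun k t ↦ susp_lift g k t)
  rw [this]

/-! ### The third homotopy group of the space of square roots of `-1` -/

lemma line_ne_zero {a b : ℍ[ℝ]} (h : ‖b - a‖ < ‖a‖) (s : I) : a + (s : ℝ) • (b - a) ≠ 0 := by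
  intro h0
  have h1 : a = -((s : ℝ) • (b - a)) := eq_neg_of_add_eq_zero_left h0
  have h2 : ‖a‖ = s * ‖b - a‖ := by
    conv_lhs => rw [h1]
    rw [norm_neg, norm_smul, Real.norm_eq_abs, abs_of_nonneg s.2.1]
  have := mul_le_of_le_one_left (norm_nonneg (b - a)) s.2.2
  linarith

/-- Surjectivity of `susp` on homotopy classes. A loop lifts to a family of closed paths at `1`, which
the factor `arc qi` turns into paths from `1` to `-1`; these are then separated and pulled tight. -/
lemma exists_susp (L : Ω^ (Fin 3) B bi) : ∃ g, GenLoop.Homotopic L (susp g) := by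
  obtain ⟨Q, hQ, hQ0, hQL, hQs, hQe, hQb⟩ := exists_lift_rel (n := 2) le_rfl
    (fun p ↦ (L (Fin.cons p.1 p.2)).1) ((loop_continuous L).comp continuous_cons)
    (fun p ↦ (L _).2) (fun y ↦ loop_boundary L (cons_one_mem y))
    (fun s y hy ↦ loop_boundary L (cons_mem s hy)) (fun _ ↦ 1) continuous_const
    (fun _ ↦ one_ne_zero) (fun _ _ ↦ rfl)
    (fun y ↦ by rw [loop_boundary L (cons_zero_mem y), one_mul, mul_one])
  let f : (Fin 2 → I) × I → ℍ[ℝ] := fun p ↦ Q (p.2, p.1) * arc qi p.2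
  have hf : Continuous f := (hQ.comp continuous_swap).mul
    (continuous_arc' continuous_const continuous_snd)
  have hf0 : ∀ p, f p ≠ 0 := fun p ↦ mul_ne_zero (hQ0 _) (arc_ne_zero qi_im _)
  have hfL : ∀ k t, f (k, t) * qi = (L (Fin.cons t k)).1 * f (k, t) := fun k t ↦ by
    have h1 : arc qi t * qi = qi * arc qi t := commute_arc rfl t
    simp only [f]
    rw [mul_assoc, h1, ← mul_assoc, hQL, mul_assoc]
  have hfs : ∀ k, f (k, 0) = 1 := fun k ↦ by simp only [f, hQs, arc_zero, mul_one]
  have hfe : ∀ k, f (k, 1) = -1 := fun k ↦ by simp only [f, hQe, arc_one, one_mul]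
  have hfb : ∀ k ∈ Cube.boundary (Fin 2), ∀ t, f (k, t) = arc qi t := fun k hk t ↦ by
    simp only [f, hQb _ _ hk, one_mul]
  obtain ⟨f', τ, hf', hτ, hs', he', hC', hd', hτC, hneg, hpos⟩ := exists_separation (n := 2)
    (by norm_num) hf hf0 hfs hfe (C := Cube.boundary (Fin 2)) isClosed_boundary
    (fun k hk ↦ ⟨qi, qi_im, hfb k hk⟩)
  obtain ⟨L', hL', hL'f⟩ := lift_step (L := L)
    (fun p ↦ f p.2 + (p.1 : ℝ) • (f' p.2 - f p.2)) (by fun_prop)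
    (fun p ↦ line_ne_zero (hd' _) _) (fun k t ↦ by simpa using hfL k t)
    (fun s k ↦ by simp [hfs, hs']) (fun s k ↦ by simp [hfe, he'])
    (fun s k hk t ↦ by
      simp only [hC' k hk, sub_self, smul_zero, add_zero, hfb k hk]
      exact commute_arc rfl _)
  obtain ⟨g, hg⟩ := exists_susp_of_separated hf' hτ hs' he'
    (fun k hk t ↦ by rw [hC' k hk, hfb k hk]) hτC hneg hpos
    (L := L') (fun k t ↦ by simpa using hL'f k t)
  exact ⟨g, hL'.trans hg⟩

lemma susp_const : susp GenLoop.const = GenLoop.const := by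
  refine GenLoop.ext _ _ fun y ↦ Subtype.ext ?_
  rw [susp_val]
  exact conj_of_comm (arc_ne_zero qi_im _) (commute_arc rfl _)

/-- Injectivity of `susp` on homotopy classes. The lifted null-homotopy is a three-parameter family of
paths from `1` to `-1`; after separation, its points at time `τ`, projected to square roots of `-1`,
form a null-homotopy of `g`. -/
lemma homotopic_const_of_susp {g : Ω^ (Fin 2) B bi}
    (h : GenLoop.Homotopic (susp g) GenLoop.const) : GenLoop.Homotopic g GenLoop.const := by
  obtain ⟨H, hH, hsq, h0, h1, hb⟩ := exists_of_homotopic h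
  have hq : ∀ t, arc qi t ≠ 0 := arc_ne_zero qi_im
  have hcq : ∀ t, arc qi t * qi = qi * arc qi t := commute_arc rfl
  let w : (Fin 3 → I) → ℍ[ℝ] := fun y ↦ arc (g (Fin.tail y)).1 (y 0) * (arc qi (y 0))⁻¹
  have hw : Continuous w :=
    (continuous_arc' ((loop_continuous g).comp continuous_tail) (continuous_apply 0)).mul
      ((continuous_arc' continuous_const (continuous_apply 0)).inv₀ fun _ ↦ hq _)
  obtain ⟨Q, hQ, hQ0, hQL, hQs, hQe, hQb⟩ := exists_lift_rel (n := 3) (by norm_num) H hH hsq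
    (fun y ↦ by rw [h1]; rfl) hb w hw
    (fun y ↦ mul_ne_zero (arc_ne_zero (im_ne_zero_of_sq (g _).2) _) (inv_ne_zero (hq _)))
    (fun y hy ↦ by
      simp only [w]
      rcases boundary_succ hy with h | h | h
      · simp [h, arc_zero]
      · simp [h, arc_one]
      · rw [loop_boundary g h, mul_inv_cancel₀ (hq _)])
    (fun y ↦ by
      have e1 : (arc qi (y 0))⁻¹ * qi = qi * (arc qi (y 0))⁻¹ :=
        (show Commute (arc qi (y 0)) qi from hcq _).inv_left₀
      have e2 := susp_lift g (Fin.tail y) (y 0)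
      rw [Fin.cons_self_tail] at e2
      simp only [w]
      rw [mul_assoc, e1, ← mul_assoc, e2, h0, mul_assoc])
  -- the arcs through `g` at the start of the deformation, the constant arc at its end
  let f : (Fin 3 → I) × I → ℍ[ℝ] := fun p ↦
    Q (p.1 0, Fin.cons p.2 (Fin.tail p.1)) * arc qi p.2
  have hf : Continuous f := by
    refine (hQ.comp ?_).mul (continuous_arc' continuous_const continuous_snd)
    exact (by fun_prop : Continuous fun p : (Fin 3 → I) × I ↦ p.1 0).prodMk
      (continuous_cons.comp (continuous_snd.prodMk (continuous_tail.comp continuous_fst)))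
  have hf0 : ∀ p, f p ≠ 0 := fun p ↦ mul_ne_zero (hQ0 _) (hq _)
  have hfs : ∀ k, f (k, 0) = 1 := fun k ↦ by
    simp only [f, hQb _ _ (cons_zero_mem _), arc_zero, mul_one]
  have hfe : ∀ k, f (k, 1) = -1 := fun k ↦ by
    simp only [f, hQb _ _ (cons_one_mem _), arc_one, one_mul]
  have hf_start : ∀ k t, k 0 = 0 → f (k, t) = arc (g (Fin.tail k)).1 t := fun k t hk ↦ by
    simp only [f, hk, hQs, w, Fin.tail_cons, Fin.cons_zero]
    rw [mul_assoc, inv_mul_cancel₀ (hq t), mul_one]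
  have hf_end : ∀ k t, k 0 = 1 → f (k, t) = arc qi t := fun k t hk ↦ by
    simp only [f, hk, hQe, one_mul]
  have hf_side : ∀ k t, (Fin.tail k : Fin 2 → I) ∈ Cube.boundary (Fin 2) →
      f (k, t) = arc qi t := fun k t hk ↦ by
    simp only [f, hQb _ _ (cons_mem t hk), one_mul]
  obtain ⟨f', τ, hf', hτ, hs', he', hC', -, hτC, hneg, hpos⟩ := exists_separation (n := 3)
    le_rfl hf hf0 hfs hfe (C := Cube.boundary (Fin 3)) isClosed_boundary (fun k hk ↦ by
      rcases boundary_succ hk with h | h | h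
      · exact ⟨_, im_ne_zero_of_sq (g _).2, fun t ↦ hf_start k t h⟩
      · exact ⟨_, qi_im, fun t ↦ hf_end k t h⟩
      · exact ⟨_, qi_im, fun t ↦ hf_side k t h⟩)
  have hx : ∀ k, (f' (k, τ k)).im ≠ 0 := fun k ↦
    im_ne_zero_of_sep (hneg k _ le_rfl) (hpos k _ le_rfl)
  have hrc : Continuous fun k ↦ ret (f' (k, τ k)) := continuous_ret (by fun_prop) hx
  refine homotopic_mk (fun p ↦ ret (f' (Fin.cons p.1 p.2, τ (Fin.cons p.1 p.2))))
    (hrc.comp continuous_cons) (fun p ↦ ret_sq (hx _)) (fun y ↦ ?_) (fun y ↦ ?_) (fun s y hy ↦ ?_)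
  · have hm := cons_zero_mem y
    simp only
    rw [hC' _ hm, hf_start _ _ rfl, arc_half (hτC _ hm), Fin.tail_cons, ret_of_sq (g y).2]
  · have hm := cons_one_mem y
    simp only
    rw [hC' _ hm, hf_end _ _ rfl, arc_half (hτC _ hm), ret_of_sq qi_mul_qi]
    rfl
  · have hm := cons_mem s hy
    simp only
    rw [hC' _ hm, hf_side _ _ (by rwa [Fin.tail_cons]), arc_half (hτC _ hm), ret_of_sq qi_mul_qi]

/-- The map `susp` induces an isomorphism. It is a homomorphism because concatenation of loops may be
taken in a coordinate other than the arc parameter. -/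
lemma pi_three : Nonempty (π_ 2 B bi ≃* π_ 3 B bi) := by
  let D : π_ 2 B bi → π_ 3 B bi := clsLift (fun f ↦ cls (susp f))
    (fun f g h ↦ cls_eq.2 (susp_homotopic h))
  have hmul : ∀ x y, D (x * y) = D x * D y := by
    intro x y
    obtain ⟨f, rfl⟩ := cls_surj x
    obtain ⟨g, rfl⟩ := cls_surj y
    rw [cls_mul 0]
    change cls (susp _) = cls (susp f) * cls (susp g)
    rw [cls_mul 1, susp_trans]
  refine ⟨MulEquiv.ofBijective (MonoidHom.mk' D hmul) ⟨?_, ?_⟩⟩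
  · rw [injective_iff_map_eq_one]
    intro x hx
    obtain ⟨f, rfl⟩ := cls_surj x
    have hx' : cls (susp f) = cls GenLoop.const := hx
    exact cls_eq.2 (homotopic_const_of_susp (cls_eq.1 hx'))
  · intro x
    obtain ⟨L, rfl⟩ := cls_surj x
    obtain ⟨g, hg⟩ := exists_susp L
    exact ⟨cls g, (cls_eq.2 hg).symm⟩

/-! ### Comparison with the unit sphere -/

/-- Postcomposition of a generalized loop with a pointed map. -/
def mapLoop {N X Y : Type*} [TopologicalSpace X] [TopologicalSpace Y] {x : X} {y : Y}
    (φ : C(X, Y)) (h : φ x = y) (f : Ω^ N X x) : Ω^ N Y y :=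
  ⟨φ.comp f.1, fun t ht ↦ by
    rw [ContinuousMap.comp_apply, ← h]; exact congrArg φ (f.2 t ht)⟩

lemma mapLoop_homotopic {N X Y : Type*} [TopologicalSpace X] [TopologicalSpace Y] {x : X} {y : Y}
    (φ : C(X, Y)) (h : φ x = y) {f g : Ω^ N X x} (H : GenLoop.Homotopic f g) :
    GenLoop.Homotopic (mapLoop φ h f) (mapLoop φ h g) :=
  ContinuousMap.HomotopicRel.comp_continuousMap H φ

lemma mapLoop_transAt {N X Y : Type*} [TopologicalSpace X] [TopologicalSpace Y] [DecidableEq N]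
    {x : X} {y : Y} (φ : C(X, Y)) (h : φ x = y) (i : N) (f g : Ω^ N X x) :
    mapLoop φ h (GenLoop.transAt i f g) = GenLoop.transAt i (mapLoop φ h f) (mapLoop φ h g) := by
  refine GenLoop.ext _ _ fun t ↦ ?_
  change φ (GenLoop.transAt i f g t) = _
  rw [GenLoop.transAt, GenLoop.transAt, GenLoop.coe_copy, GenLoop.coe_copy, apply_ite φ]
  rfl

/-- Pointed homeomorphisms induce isomorphisms of homotopy groups. -/
def homeoMulEquiv {N X Y : Type*} [TopologicalSpace X] [TopologicalSpace Y] [DecidableEq N]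
    [Nonempty N] {x : X} {y : Y} (φ : X ≃ₜ Y) (h : φ x = y) :
    HomotopyGroup N X x ≃* HomotopyGroup N Y y where
  toFun := clsLift (fun f ↦ cls (mapLoop φ h f)) fun _ _ H ↦ cls_eq.2 (mapLoop_homotopic _ _ H)
  invFun := clsLift (fun f ↦ cls (mapLoop φ.symm (φ.symm_apply_eq.2 h.symm) f))
    fun _ _ H ↦ cls_eq.2 (mapLoop_homotopic _ _ H)
  left_inv a := by
    obtain ⟨f, rfl⟩ := cls_surj a
    rw [clsLift_cls, clsLift_cls]
    exact congrArg cls (GenLoop.ext _ _ fun t ↦ φ.symm_apply_apply (f t))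
  right_inv a := by
    obtain ⟨f, rfl⟩ := cls_surj a
    rw [clsLift_cls, clsLift_cls]
    exact congrArg cls (GenLoop.ext _ _ fun t ↦ φ.apply_symm_apply (f t))
  map_mul' a b := by
    obtain ⟨f, rfl⟩ := cls_surj a
    obtain ⟨g, rfl⟩ := cls_surj b
    let i := Classical.arbitrary N
    rw [cls_mul i, clsLift_cls, clsLift_cls, clsLift_cls, cls_mul i, mapLoop_transAt]

/-- The purely imaginary quaternion with the given coordinates. -/
def ofVec (v : EuclideanSpace ℝ (Fin 3)) : ℍ[ℝ] := ⟨0, v 0, v 1, v 2⟩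

@[simp] lemma ofVec_re (v : EuclideanSpace ℝ (Fin 3)) : (ofVec v).re = 0 := rfl
@[simp] lemma ofVec_imI (v : EuclideanSpace ℝ (Fin 3)) : (ofVec v).imI = v 0 := rfl
@[simp] lemma ofVec_imJ (v : EuclideanSpace ℝ (Fin 3)) : (ofVec v).imJ = v 1 := rfl
@[simp] lemma ofVec_imK (v : EuclideanSpace ℝ (Fin 3)) : (ofVec v).imK = v 2 := rfl

lemma continuous_ofVec : Continuous ofVec := by
  have h : Continuous fun v : EuclideanSpace ℝ (Fin 3) ↦
      Quaternion.linearIsometryEquivTuple.symm (!₂[0, v 0, v 1, v 2]) := by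
    refine (LinearIsometryEquiv.continuous _).comp
      ((PiLp.continuous_toLp 2 _).comp (continuous_pi fun i ↦ ?_))
    fin_cases i <;> simp <;> fun_prop
  exact h

/-- The unit sphere of `ℝ³`, viewed as the purely imaginary unit quaternions. -/
noncomputable def sphereHomeo : Metric.sphere (0 : EuclideanSpace ℝ (Fin 3)) 1 ≃ₜ B where
  toFun v := ⟨ofVec v.1, by
    have h := mem_sphere_zero_iff_norm.1 v.2
    rw [EuclideanSpace.norm_eq, Real.sqrt_eq_one, Fin.sum_univ_three] at h
    simp only [Real.norm_eq_abs, sq_abs] at h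
    ext
    · simp; linarith
    all_goals (simp; ring)⟩
  invFun a := ⟨!₂[a.1.imI, a.1.imJ, a.1.imK], by
    have h1 := congrArg (·.re) a.2
    have h2 := (re_im_of_sq a.2).1
    rw [mem_sphere_zero_iff_norm, EuclideanSpace.norm_eq, Real.sqrt_eq_one, Fin.sum_univ_three]
    simp [h2] at h1 ⊢
    linarith⟩
  left_inv v := by
    refine Subtype.ext (PiLp.ext fun i ↦ ?_)
    fin_cases i <;> rfl
  right_inv a := by
    have h2 := (re_im_of_sq a.2).1
    refine Subtype.ext ?_
    ext <;> simp [h2]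
  continuous_toFun := by
    refine Continuous.subtype_mk ?_ _
    exact continuous_ofVec.comp continuous_subtype_val
  continuous_invFun := by
    refine Continuous.subtype_mk ?_ _
    have h1 := Quaternion.continuous_imI
    have h2 := Quaternion.continuous_imJ
    have h3 := Quaternion.continuous_imK
    refine (PiLp.continuous_toLp 2 _).comp (continuous_pi fun i ↦ ?_)
    fin_cases i <;> simp <;> fun_prop

/-- A reflection moves the basepoint to the one corresponding to `i`. -/
lemma exists_pointed_homeo (b : Metric.sphere (0 : EuclideanSpace ℝ (Fin 3)) 1) :
    ∃ φ : Metric.sphere (0 : EuclideanSpace ℝ (Fin 3)) 1 ≃ₜ B, φ b = bi := by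
  let e := sphereHomeo.symm bi
  have hn : ‖b.1‖ = ‖e.1‖ := by
    rw [mem_sphere_zero_iff_norm.1 b.2, mem_sphere_zero_iff_norm.1 e.2]
  let R := Submodule.reflection (ℝ ∙ (b.1 - e.1))ᗮ
  have hR : R b.1 = e.1 := Submodule.reflection_sub hn
  let ψ : Metric.sphere (0 : EuclideanSpace ℝ (Fin 3)) 1 ≃ₜ
      Metric.sphere (0 : EuclideanSpace ℝ (Fin 3)) 1 :=
    R.toHomeomorph.subtype fun x ↦ by simp
  refine ⟨ψ.trans sphereHomeo, ?_⟩
  have : ψ b = e := Subtype.ext hR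
  rw [Homeomorph.trans_apply, this]
  exact sphereHomeo.apply_symm_apply bi

end PiThree

/-- The third homotopy group of the 2-sphere (the unit sphere in `ℝ³`, with the
subspace topology) at any basepoint is isomorphic to the group of integers. -/
theorem pi3_sphere2_iso_int
    (b : Metric.sphere (0 : EuclideanSpace ℝ (Fin 3)) 1) :
    Nonempty ((π_ 3 (Metric.sphere (0 : EuclideanSpace ℝ (Fin 3)) 1) b) ≃*
      Multiplicative ℤ) := by
  obtain ⟨φ, hφ⟩ := PiThree.exists_pointed_homeo b
  obtain ⟨e₂⟩ := PiThree.pi_two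
  obtain ⟨e₃⟩ := PiThree.pi_three
  exact ⟨((PiThree.homeoMulEquiv φ hφ).trans e₃.symm).trans e₂⟩
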